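/- arXiv:1709.06183 — 2 statements merged into one kernel-verified Lean document; each statement's English description precedes it below -/
import Mathlib

section
/- Fix integers r ≥ 1, s ≥ 0 and a constant L > 0. There exists a constant c > 0 depending only on r, s, L such that for every function f : [0,1] → ℝ satisfying condition D_s with parameter L and every integer n ≥ 2r, the delete-1 r-jackknife bias satisfies: sup_{p∈[0,1]} |Σ_{i=1}^r C_i B_{n−r+i}[f](p) − f(p)| ≤ c n^{r−s−1} if 0 ≤ s ≤ 2r−2, ≤ c n^{−(r−1/2)} if s = 2r−1, and ≤ c n^{−r} if s ≥ 2r, where C_i are the jackknife coefficients for the sample sizes n_i = n − r + i. -/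
/-- Bernstein operator: `B_m[g](p) = Σ_{k=0}^m C(m,k) p^k (1-p)^{m-k} g(k/m)`. -/
noncomputable def bernstein' (m : ℕ) (g : ℝ → ℝ) (p : ℝ) : ℝ :=
  ∑ k ∈ Finset.range (m + 1), (m.choose k : ℝ) * p ^ k * (1 - p) ^ (m - k) * g ((k : ℝ) / m)

/-- `r`-th symmetric difference of `g` with step `h`, vanishing near the boundary of `[0,1]`. -/
noncomputable def ditzSymmDiff (r : ℕ) (h : ℝ) (g : ℝ → ℝ) (x : ℝ) : ℝ :=
  if x - r * h / 2 ∈ Set.Icc (0:ℝ) 1 ∧ x + r * h / 2 ∈ Set.Icc (0:ℝ) 1 then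
    ∑ k ∈ Finset.range (r + 1), (-1 : ℝ) ^ k * (r.choose k : ℝ) * g (x + r * h / 2 - k * h)
  else 0

/-- `r`-th Ditzian–Totik modulus of smoothness with weight `φ(x) = √(x(1-x))`. -/
noncomputable def dtMod (r : ℕ) (g : ℝ → ℝ) (t : ℝ) : ℝ :=
  sSup {y : ℝ | ∃ h x : ℝ, 0 < h ∧ h ≤ t ∧ x ∈ Set.Icc (0:ℝ) 1 ∧
    y = |ditzSymmDiff r (h * Real.sqrt (x * (1 - x))) g x|}

/-- Sup norm on `[0,1]`. -/
noncomputable def supAbsOn (g : ℝ → ℝ) : ℝ := sSup ((fun p => |g p|) '' Set.Icc (0:ℝ) 1)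

/-- Jackknife coefficients `C_i = ∏_{j≠i} n_i/(n_i - n_j)`. -/
noncomputable def jackCoeff {r : ℕ} (ns : Fin r → ℕ) (i : Fin r) : ℝ :=
  ∏ j ∈ Finset.univ.erase i, (ns i : ℝ) / ((ns i : ℝ) - (ns j : ℝ))

/-- Sup over `p ∈ [0,1]` of the `r`-jackknife bias `|Σ_i C_i B_{n_i}[f](p) - f(p)|`. -/
noncomputable def jackBias {r : ℕ} (ns : Fin r → ℕ) (f : ℝ → ℝ) : ℝ :=
  sSup ((fun p => |(∑ i, jackCoeff ns i * bernstein' (ns i) f p) - f p|) '' Set.Icc (0:ℝ) 1)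

/-- Condition `D_s` with parameter `L`: for `s = 0`, `f` is Lebesgue integrable on `[0,1]`
with `|f| ≤ L`; for `s ≥ 1`, `f` is `s-1` times (continuously) differentiable on `[0,1]`,
`|f^{(i)}| ≤ L` for `0 ≤ i ≤ s-1`, and `f^{(s-1)}` is `L`-Lipschitz on `[0,1]` (equivalently,
absolutely continuous with `|f^{(s)}| ≤ L` a.e.). -/
def CondD (s : ℕ) (L : ℝ) (f : ℝ → ℝ) : Prop :=
  if s = 0 then
    MeasureTheory.IntegrableOn f (Set.Icc 0 1) ∧ ∀ x ∈ Set.Icc (0:ℝ) 1, |f x| ≤ L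
  else
    ContDiffOn ℝ (s - 1) f (Set.Icc 0 1) ∧
    (∀ i ≤ s - 1, ∀ x ∈ Set.Icc (0:ℝ) 1, |iteratedDerivWithin i f (Set.Icc 0 1) x| ≤ L) ∧
    LipschitzOnWith (Real.toNNReal L) (iteratedDerivWithin (s - 1) f (Set.Icc 0 1))
      (Set.Icc 0 1)

section BinomialExpectation

open Finset

/-- Expectation of `g` under the binomial law with parameters `m` and `p`. -/
noncomputable def binExp (p : ℝ) (m : ℕ) (g : ℕ → ℝ) : ℝ :=
  ∑ k ∈ range (m + 1), (m.choose k : ℝ) * p ^ k * (1 - p) ^ (m - k) * g k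

theorem binExp_zero (p : ℝ) (g : ℕ → ℝ) : binExp p 0 g = g 0 := by
  simp [binExp]

theorem binExp_add (p : ℝ) (m : ℕ) (g h : ℕ → ℝ) :
    binExp p m (fun k => g k + h k) = binExp p m g + binExp p m h := by
  simp [binExp, mul_add, sum_add_distrib]

theorem binExp_const_mul (p : ℝ) (m : ℕ) (c : ℝ) (g : ℕ → ℝ) :
    binExp p m (fun k => c * g k) = c * binExp p m g := by
  simp only [binExp, mul_sum]
  exact sum_congr rfl fun _ _ => by ring

theorem binExp_sum {ι : Type*} (p : ℝ) (m : ℕ) (s : Finset ι) (g : ι → ℕ → ℝ) :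
    binExp p m (fun k => ∑ i ∈ s, g i k) = ∑ i ∈ s, binExp p m (g i) := by
  simp only [binExp, mul_sum]
  exact sum_comm

theorem binExp_const (p : ℝ) (m : ℕ) (c : ℝ) : binExp p m (fun _ => c) = c := by
  have h := add_pow p (1 - p) m
  rw [add_sub_cancel, one_pow] at h
  rw [binExp, ← sum_mul]
  convert one_mul c
  exact (sum_congr rfl fun _ _ => by ring).trans h.symm

theorem abs_binExp_le {p : ℝ} (hp : p ∈ Set.Icc (0 : ℝ) 1) {m : ℕ} {g h : ℕ → ℝ}
    (hgh : ∀ k ≤ m, |g k| ≤ h k) : |binExp p m g| ≤ binExp p m h := by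
  refine (abs_sum_le_sum_abs _ _).trans (sum_le_sum fun k hk => ?_)
  have h0 : 0 ≤ (m.choose k : ℝ) * p ^ k * (1 - p) ^ (m - k) :=
    mul_nonneg (mul_nonneg (Nat.cast_nonneg _) (pow_nonneg hp.1 _))
      (pow_nonneg (sub_nonneg.2 hp.2) _)
  rw [abs_mul, abs_of_nonneg h0]
  exact mul_le_mul_of_nonneg_left (hgh k (by grind)) h0

theorem binExp_succ (p : ℝ) (m : ℕ) (g : ℕ → ℝ) :
    binExp p (m + 1) g = p * binExp p m (fun k => g (k + 1)) + (1 - p) * binExp p m g := by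
  have key := sum_antidiagonal_choose_succ_mul (fun i j => p ^ i * (1 - p) ^ j * g i) m
  rw [Nat.sum_antidiagonal_eq_sum_range_succ
      (fun i j => ((m + 1).choose i : ℝ) * (p ^ i * (1 - p) ^ j * g i)),
    Nat.sum_antidiagonal_eq_sum_range_succ
      (fun i j => (m.choose i : ℝ) * (p ^ i * (1 - p) ^ (j + 1) * g i)),
    Nat.sum_antidiagonal_eq_sum_range_succ
      (fun i j => (m.choose j : ℝ) * (p ^ (i + 1) * (1 - p) ^ j * g (i + 1)))] at key
  simp only [binExp, mul_sum]
  rw [add_comm (∑ _ ∈ _, p * _)]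
  convert key using 1
  · exact sum_congr rfl fun _ _ => by ring
  · congr 1
    · exact sum_congr rfl fun _ _ => by ring
    · refine sum_congr rfl fun k hk => ?_
      rw [Nat.choose_symm (by grind)]
      ring

theorem binExp_add_index (p : ℝ) (m j : ℕ) (g : ℕ → ℝ) :
    binExp p (m + j) g = binExp p m fun k => binExp p j fun l => g (k + l) := by
  induction j generalizing g with
  | zero => simp [binExp_zero]
  | succ j ih =>
    simp only [← add_assoc, binExp_succ, ih, binExp_add, binExp_const_mul]

/-- `centralMomentCoeff p c d` is the coefficient of `m.choose d` in the `c`-th central moment of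
the binomial law with parameters `m` and `p`. -/
noncomputable def centralMomentCoeff (p : ℝ) : ℕ → ℕ → ℝ
  | 0, c => if c = 0 then 1 else 0
  | d + 1, c => ∑ i ∈ range (c - 1), (c.choose (i + 2) : ℝ) *
      (p * (1 - p) ^ (i + 2) + (1 - p) * (-p) ^ (i + 2)) * centralMomentCoeff p d (c - (i + 2))

theorem centralMomentCoeff_eq_zero (p : ℝ) {d c : ℕ} (h : c < 2 * d) :
    centralMomentCoeff p d c = 0 := by
  induction d generalizing c with
  | zero => omega
  | succ d ih =>
    refine sum_eq_zero fun i hi => ?_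
    rw [ih (by grind), mul_zero]

theorem exists_abs_centralMomentCoeff_le (d c : ℕ) :
    ∃ K, ∀ p ∈ Set.Icc (0 : ℝ) 1, |centralMomentCoeff p d c| ≤ K := by
  induction d generalizing c with
  | zero => exact ⟨1, fun p _ => by simp only [centralMomentCoeff]; split_ifs <;> simp⟩
  | succ d ih =>
    choose K hK using ih
    refine ⟨∑ i ∈ range (c - 1), (c.choose (i + 2) : ℝ) * 2 * K (c - (i + 2)), fun p hp => ?_⟩
    refine (abs_sum_le_sum_abs _ _).trans (sum_le_sum fun i _ => ?_)
    have h1 : |p * (1 - p) ^ (i + 2) + (1 - p) * (-p) ^ (i + 2)| ≤ 2 := by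
      refine (abs_add_le _ _).trans ?_
      have hp1 : |p| ≤ 1 := abs_le.2 ⟨by linarith [hp.1], hp.2⟩
      have hq1 : |1 - p| ≤ 1 := abs_le.2 ⟨by linarith [hp.2], by linarith [hp.1]⟩
      have h2 := mul_le_one₀ hp1 (by positivity) (pow_le_one₀ (n := i + 2) (abs_nonneg _) hq1)
      have h3 := mul_le_one₀ hq1 (by positivity) (pow_le_one₀ (n := i + 2) (abs_nonneg _) hp1)
      rw [abs_mul, abs_mul, abs_pow, abs_pow, abs_neg]
      linarith
    rw [abs_mul, abs_mul, Nat.abs_cast]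
    gcongr
    exact hK _ p hp

theorem binExp_centralMoment_succ (p : ℝ) (m c : ℕ) :
    binExp p (m + 1) (fun k => ((k : ℝ) - (m + 1 : ℕ) * p) ^ c) =
      ∑ i ∈ range (c + 1), (c.choose i : ℝ) * (p * (1 - p) ^ i + (1 - p) * (-p) ^ i) *
        binExp p m (fun k => ((k : ℝ) - m * p) ^ (c - i)) := by
  have h1 : ∀ q : ℝ, binExp p m (fun k => (q + ((k : ℝ) - m * p)) ^ c) =
      ∑ i ∈ range (c + 1), (c.choose i : ℝ) * q ^ i *
        binExp p m (fun k => ((k : ℝ) - m * p) ^ (c - i)) := by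
    intro q
    simp only [add_pow, binExp_sum, ← binExp_const_mul]
    refine sum_congr rfl fun i _ => ?_
    congr 1
    funext k
    ring
  rw [binExp_succ]
  have e1 : (fun k : ℕ => (((k + 1 : ℕ) : ℝ) - (m + 1 : ℕ) * p) ^ c) =
      fun k : ℕ => ((1 - p) + ((k : ℝ) - m * p)) ^ c := by
    funext k; push_cast; ring_nf
  have e2 : (fun k : ℕ => ((k : ℝ) - (m + 1 : ℕ) * p) ^ c) =
      fun k : ℕ => (-p + ((k : ℝ) - m * p)) ^ c := by
    funext k; push_cast; ring_nf
  rw [e1, e2, h1, h1, mul_sum, mul_sum, ← sum_add_distrib]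
  exact sum_congr rfl fun _ _ => by ring

theorem binExp_centralMoment_eq_sum_choose (p : ℝ) (m c : ℕ) :
    binExp p m (fun k => ((k : ℝ) - m * p) ^ c) =
      ∑ d ∈ range (m + 1), centralMomentCoeff p d c * (m.choose d : ℝ) := by
  induction m generalizing c with
  | zero => cases c <;> simp [binExp_zero, centralMomentCoeff]
  | succ m ih =>
    have h1 : ∑ d ∈ range (m + 2), centralMomentCoeff p d c * ((m + 1).choose d : ℝ) =
        ∑ d ∈ range (m + 1), centralMomentCoeff p d c * (m.choose d : ℝ) +
        ∑ d ∈ range (m + 1), centralMomentCoeff p (d + 1) c * (m.choose d : ℝ) := by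
      have h2 : ∑ d ∈ range (m + 1), centralMomentCoeff p d c * (m.choose d : ℝ) =
          ∑ d ∈ range (m + 2), centralMomentCoeff p d c * (m.choose d : ℝ) := by
        simp [sum_range_succ _ (m + 1)]
      rw [h2, sum_range_succ', sum_range_succ' _ (m + 1), add_right_comm, ← sum_add_distrib]
      simp only [Nat.choose_succ_succ, Nat.choose_zero_right, Nat.cast_add]
      congr 1
      exact sum_congr rfl fun _ _ => by ring
    rw [binExp_centralMoment_succ, h1, ← ih]
    simp only [centralMomentCoeff, sum_mul]
    rw [sum_comm]
    simp only [mul_assoc, ← mul_sum, ← ih]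
    rcases c with - | c
    · simp
    · rw [sum_range_succ', sum_range_succ', add_tsub_cancel_right, add_comm,
        add_comm (∑ _ ∈ _, _), ← add_assoc]
      simp
      right; left; ring

/-- The `c`-th central moment of a binomial law is a polynomial of degree at most `c / 2` in the
number of trials, with coefficients bounded uniformly in the success probability. -/
theorem exists_binExp_centralMoment_eq_sum_pow (c : ℕ) :
    ∃ K : ℝ, 0 ≤ K ∧ ∀ p ∈ Set.Icc (0 : ℝ) 1, ∃ b : ℕ → ℝ, (∀ l, |b l| ≤ K) ∧
      ∀ m : ℕ, binExp p m (fun k => ((k : ℝ) - m * p) ^ c) =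
        ∑ l ∈ range (c / 2 + 1), b l * (m : ℝ) ^ l := by
  choose K hK using fun d => exists_abs_centralMomentCoeff_le d c
  have hK0 : ∀ d, 0 ≤ K d := fun d => (abs_nonneg _).trans (hK d 0 (by simp))
  have hpos : ∀ l, 0 ≤ ∑ d ∈ range (c / 2 + 1),
      K d * |(descPochhammer ℝ d).coeff l / d.factorial| := fun l =>
    sum_nonneg fun d _ => mul_nonneg (hK0 d) (abs_nonneg _)
  refine ⟨∑ l ∈ range (c / 2 + 1), ∑ d ∈ range (c / 2 + 1),
    K d * |(descPochhammer ℝ d).coeff l / d.factorial|, sum_nonneg fun l _ => hpos l, fun p hp =>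
    ⟨fun l => if l ∈ range (c / 2 + 1) then ∑ d ∈ range (c / 2 + 1),
      centralMomentCoeff p d c * ((descPochhammer ℝ d).coeff l / d.factorial) else 0,
      fun l => ?_, fun m => ?_⟩⟩
  · beta_reduce
    split_ifs with hl
    · refine le_trans ?_ (single_le_sum (f := fun l => ∑ d ∈ range (c / 2 + 1),
        K d * |(descPochhammer ℝ d).coeff l / d.factorial|) (fun l _ => hpos l) hl)
      refine (abs_sum_le_sum_abs _ _).trans (sum_le_sum fun d _ => ?_)
      rw [abs_mul]
      gcongr
      exact hK d p hp
    · rw [abs_zero]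
      exact sum_nonneg fun l _ => hpos l
  · have h1 : ∑ d ∈ range (m + 1), centralMomentCoeff p d c * (m.choose d : ℝ) =
        ∑ d ∈ range (c / 2 + 1), centralMomentCoeff p d c * (m.choose d : ℝ) := by
      rcases le_total (m + 1) (c / 2 + 1) with h | h
      · refine sum_subset (range_mono h) fun d _ hd => ?_
        rw [Nat.choose_eq_zero_of_lt (by simpa using hd), Nat.cast_zero, mul_zero]
      · refine (sum_subset (range_mono h) fun d _ hd => ?_).symm
        rw [centralMomentCoeff_eq_zero, zero_mul]
        simp only [mem_range, not_lt] at hd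
        omega
    rw [binExp_centralMoment_eq_sum_choose, h1]
    have h2 : ∀ d ∈ range (c / 2 + 1), centralMomentCoeff p d c * (m.choose d : ℝ) =
        ∑ l ∈ range (c / 2 + 1), centralMomentCoeff p d c *
          ((descPochhammer ℝ d).coeff l / d.factorial) * (m : ℝ) ^ l := by
      intro d hd
      rw [Nat.cast_choose_eq_descPochhammer_div, Polynomial.eval_eq_sum_range'
        (n := c / 2 + 1) (by rw [descPochhammer_natDegree]; simpa using hd), sum_div, mul_sum]
      exact sum_congr rfl fun _ _ => by ring
    rw [sum_congr rfl h2, sum_comm]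
    refine sum_congr rfl fun l hl => ?_
    beta_reduce
    rw [if_pos hl, sum_mul]

end BinomialExpectation

section JackknifeWeights

open Finset

/-- The divided-difference weights at the nodes `0, 1, …, k`. -/
noncomputable def jackWeight (k : ℕ) (i : Fin (k + 1)) : ℝ :=
  (∏ j ∈ univ.erase i, ((i : ℝ) - j))⁻¹

theorem jackCoeff_add_val (k N : ℕ) (i : Fin (k + 1)) :
    jackCoeff (fun i : Fin (k + 1) => N + i.val) i = ((N : ℝ) + i) ^ k * jackWeight k i := by
  simp [jackCoeff, jackWeight, div_eq_mul_inv, prod_mul_distrib, card_erase_of_mem]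

theorem sum_jackWeight_mul_eval {k : ℕ} (P : Polynomial ℝ) (hP : P.natDegree ≤ k) (N : ℝ) :
    ∑ i, jackWeight k i * P.eval (N + i) = P.coeff k := by
  have hinj : Set.InjOn (fun i : Fin (k + 1) => N + (i : ℝ)) (univ : Finset (Fin (k + 1))) := by
    intro i _ j _ h
    simpa [Fin.ext_iff] using h
  have h := Lagrange.coeff_eq_sum hinj (P := P) (by
    rw [card_univ, Fintype.card_fin]
    exact (Polynomial.degree_le_of_natDegree_le hP).trans_lt (by exact_mod_cast k.lt_succ_self))
  rw [card_univ, Fintype.card_fin, add_tsub_cancel_right] at h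
  rw [h]
  refine sum_congr rfl fun i _ => ?_
  simp [jackWeight, div_eq_inv_mul]

theorem sum_jackWeight_mul_pow_of_lt {k e : ℕ} (he : e < k) (N : ℝ) :
    ∑ i, jackWeight k i * (N + i) ^ e = 0 := by
  have h := sum_jackWeight_mul_eval (k := k) (Polynomial.X ^ e) (by simpa using he.le) N
  simpa [Polynomial.coeff_X_pow, he.ne'] using h

theorem sum_jackCoeff (k N : ℕ) :
    ∑ i, jackCoeff (fun i : Fin (k + 1) => N + i.val) i = 1 := by
  have h := sum_jackWeight_mul_eval (k := k) (Polynomial.X ^ k) (by simp) N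
  simpa [jackCoeff_add_val, mul_comm] using h

/-- Divided differences of `x ^ e * h (x / N)` have the order predicted by the Taylor expansion
of `h` at `0`. -/
theorem exists_abs_sum_jackWeight_mul_le (k e : ℕ) (h : ℝ → ℝ)
    (hh : ContDiffOn ℝ (k + 1) h (Set.Icc 0 1)) :
    ∃ C : ℝ, 0 ≤ C ∧ ∀ N : ℕ, k + 1 ≤ N →
      |∑ i, jackWeight k i * ((i : ℝ) ^ e * h (i / N))| * (N : ℝ) ^ k ≤ C * (N : ℝ) ^ e := by
  obtain ⟨C₀, hC₀⟩ := exists_taylor_mean_remainder_bound zero_le_one hh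
  simp only [taylor_within_apply, sub_zero, smul_eq_mul, Real.norm_eq_abs] at hC₀
  set c : ℕ → ℝ := fun m => (m.factorial : ℝ)⁻¹ * iteratedDerivWithin m h (Set.Icc 0 1) 0 with hc
  have hC0 : 0 ≤ C₀ := by
    have := (abs_nonneg _).trans (hC₀ 1 (by simp))
    simpa using this
  set S : ℕ → ℝ := fun l => ∑ i, jackWeight k i * (i : ℝ) ^ l with hS
  refine ⟨∑ m ∈ range (k + 1), |c m| * |S (e + m)| +
    ∑ i, |jackWeight k i| * ((i : ℝ) ^ e * (C₀ * (i : ℝ) ^ (k + 1))), by positivity,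
    fun N hN => ?_⟩
  have hN1 : (1 : ℝ) ≤ N := by exact_mod_cast (by omega : 1 ≤ N)
  have hN0 : (0 : ℝ) < N := by linarith
  set ρ : ℝ → ℝ := fun t => h t - ∑ m ∈ range (k + 1), c m * t ^ m with hρ
  have hsplit : ∑ i, jackWeight k i * ((i : ℝ) ^ e * h (i / N)) =
      ∑ m ∈ range (k + 1), c m * S (e + m) / (N : ℝ) ^ m +
      ∑ i, jackWeight k i * ((i : ℝ) ^ e * ρ (i / N)) := by
    have h1 : ∑ m ∈ range (k + 1), c m * S (e + m) / (N : ℝ) ^ m =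
        ∑ i, jackWeight k i * ((i : ℝ) ^ e * ∑ m ∈ range (k + 1), c m * ((i : ℝ) / N) ^ m) := by
      simp only [hS, mul_sum, sum_div]
      rw [sum_comm]
      refine sum_congr rfl fun i _ => sum_congr rfl fun m _ => ?_
      rw [div_pow, pow_add]
      ring
    rw [h1, ← sum_add_distrib]
    refine sum_congr rfl fun i _ => ?_
    rw [hρ]
    ring
  rw [hsplit, add_mul]
  refine (mul_le_mul_of_nonneg_right (abs_add_le _ _) (by positivity)).trans ?_
  rw [add_mul]
  refine add_le_add ?_ ?_
  · refine (mul_le_mul_of_nonneg_right (abs_sum_le_sum_abs _ _) (by positivity)).trans ?_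
    rw [sum_mul, sum_mul]
    refine sum_le_sum fun m _ => ?_
    rw [abs_div, abs_mul, abs_of_pos (pow_pos hN0 m), div_mul_eq_mul_div,
      div_le_iff₀ (pow_pos hN0 m), mul_assoc _ ((N : ℝ) ^ e), ← pow_add]
    rcases lt_or_ge (e + m) k with hlt | hge
    · have h0 : S (e + m) = 0 := by simpa using sum_jackWeight_mul_pow_of_lt hlt 0
      simp [h0]
    · gcongr
  · refine (mul_le_mul_of_nonneg_right (abs_sum_le_sum_abs _ _) (by positivity)).trans ?_
    rw [sum_mul, sum_mul]
    refine sum_le_sum fun i _ => ?_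
    have hi : (i : ℝ) ≤ N := by exact_mod_cast (by omega : (i : ℕ) ≤ N)
    have hmem : (i : ℝ) / N ∈ Set.Icc (0 : ℝ) 1 := ⟨by positivity, (div_le_one hN0).2 hi⟩
    have hρi : |ρ (i / N)| * (N : ℝ) ^ k ≤ C₀ * (i : ℝ) ^ (k + 1) := by
      have h2 : |ρ (i / N)| ≤ C₀ * ((i : ℝ) / N) ^ (k + 1) := by
        refine le_trans (le_of_eq ?_) (hC₀ _ hmem)
        simp only [hρ, hc]
        congr 2
        exact sum_congr rfl fun _ _ => by ring
      calc |ρ (i / N)| * (N : ℝ) ^ k ≤ C₀ * ((i : ℝ) / N) ^ (k + 1) * (N : ℝ) ^ k := by gcongr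
        _ = C₀ * (i : ℝ) ^ (k + 1) / N := by rw [div_pow]; field_simp; ring
        _ ≤ C₀ * (i : ℝ) ^ (k + 1) := div_le_self (by positivity) hN1
    rw [abs_mul, abs_mul, abs_of_nonneg (by positivity : (0 : ℝ) ≤ (i : ℝ) ^ e)]
    calc |jackWeight k i| * ((i : ℝ) ^ e * |ρ (i / N)|) * (N : ℝ) ^ k
        = |jackWeight k i| * ((i : ℝ) ^ e * (|ρ (i / N)| * (N : ℝ) ^ k)) := by ring
      _ ≤ |jackWeight k i| * ((i : ℝ) ^ e * (C₀ * (i : ℝ) ^ (k + 1))) := by gcongr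
      _ ≤ |jackWeight k i| * ((i : ℝ) ^ e * (C₀ * (i : ℝ) ^ (k + 1))) * (N : ℝ) ^ e :=
        le_mul_of_one_le_right (by positivity) (one_le_pow₀ hN1)

theorem exists_abs_sum_jackCoeff_mul_pow_div_le (k e a : ℕ) :
    ∃ C : ℝ, 0 ≤ C ∧ ∀ N : ℕ, k + 1 ≤ N →
      |∑ i, jackCoeff (fun i : Fin (k + 1) => N + i.val) i * ((i : ℝ) ^ e / ((N : ℝ) + i) ^ a)| ≤
        C * ((N : ℝ) ^ e / (N : ℝ) ^ a) := by
  have hh : ContDiffOn ℝ (k + 1) (fun t : ℝ => (1 + t) ^ k / (1 + t) ^ a) (Set.Icc 0 1) := by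
    refine ContDiffOn.div (by fun_prop) (by fun_prop) fun t ht => ?_
    have := ht.1
    positivity
  obtain ⟨C, hC, h⟩ := exists_abs_sum_jackWeight_mul_le k e _ hh
  refine ⟨C, hC, fun N hN => ?_⟩
  have hN0 : (0 : ℝ) < N := by exact_mod_cast (by omega : 0 < N)
  have hsum : ∑ i, jackCoeff (fun i : Fin (k + 1) => N + i.val) i *
      ((i : ℝ) ^ e / ((N : ℝ) + i) ^ a) =
      (∑ i, jackWeight k i * ((i : ℝ) ^ e * ((1 + (i : ℝ) / N) ^ k / (1 + (i : ℝ) / N) ^ a))) *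
        (N : ℝ) ^ k / (N : ℝ) ^ a := by
    rw [sum_mul, sum_div]
    refine sum_congr rfl fun i _ => ?_
    have hNi : (N : ℝ) + i = N * (1 + i / N) := by field_simp
    have h1 : (0 : ℝ) < 1 + i / N := by positivity
    rw [jackCoeff_add_val, hNi, mul_pow, mul_pow]
    field_simp
  rw [hsum, abs_div, abs_mul, abs_of_pos (pow_pos hN0 k), abs_of_pos (pow_pos hN0 a),
    ← mul_div_assoc]
  exact div_le_div_of_nonneg_right (h N hN) (by positivity)

theorem exists_abs_sum_jackCoeff_div_le (k e : ℕ) (he : 1 ≤ e) :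
    ∃ C : ℝ, 0 ≤ C ∧ ∀ N : ℕ, k + 1 ≤ N →
      |∑ i, jackCoeff (fun i : Fin (k + 1) => N + i.val) i / ((N : ℝ) + i) ^ e| ≤
        C / (N : ℝ) ^ (k + 1) := by
  rcases le_or_gt e k with hek | hek
  · refine ⟨0, le_rfl, fun N hN => ?_⟩
    have hN0 : (0 : ℝ) < N := by exact_mod_cast (by omega : 0 < N)
    have h0 : ∑ i, jackCoeff (fun i : Fin (k + 1) => N + i.val) i / ((N : ℝ) + i) ^ e =
        ∑ i, jackWeight k i * ((N : ℝ) + i) ^ (k - e) := by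
      refine sum_congr rfl fun i _ => ?_
      rw [jackCoeff_add_val, pow_sub₀ _ (by positivity) hek]
      ring
    rw [h0, sum_jackWeight_mul_pow_of_lt (by omega)]
    simp
  · obtain ⟨C, hC, h⟩ := exists_abs_sum_jackCoeff_mul_pow_div_le k 0 e
    refine ⟨C, hC, fun N hN => ?_⟩
    have hN1 : (1 : ℝ) ≤ N := by exact_mod_cast (by omega : 1 ≤ N)
    have h1 := h N hN
    simp only [pow_zero, mul_one_div] at h1
    refine h1.trans ?_
    gcongr
    omega

theorem exists_sum_abs_jackCoeff_le (k : ℕ) :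
    ∃ C : ℝ, 0 ≤ C ∧ ∀ N : ℕ, k + 1 ≤ N →
      ∑ i, |jackCoeff (fun i : Fin (k + 1) => N + i.val) i| ≤ C * (N : ℝ) ^ k := by
  refine ⟨∑ i, 2 ^ k * |jackWeight k i|, by positivity, fun N hN => ?_⟩
  rw [sum_mul]
  refine sum_le_sum fun i _ => ?_
  have hi : (i : ℝ) ≤ N := by exact_mod_cast (by omega : (i : ℕ) ≤ N)
  rw [jackCoeff_add_val, abs_mul, abs_of_nonneg (by positivity), mul_right_comm, ← mul_pow]
  gcongr
  linarith

end JackknifeWeights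

section TaylorJets

open Finset

theorem CondD.abs_iteratedDerivWithin_sub_taylor_le {s : ℕ} {L : ℝ} (hL : 0 ≤ L) {f : ℝ → ℝ}
    (h : CondD (s + 1) L f) {d a : ℕ} (had : a + d = s) {x y : ℝ} (hx : x ∈ Set.Icc (0 : ℝ) 1)
    (hy : y ∈ Set.Icc (0 : ℝ) 1) :
    |iteratedDerivWithin a f (Set.Icc 0 1) y - ∑ b ∈ range (d + 1),
      iteratedDerivWithin (a + b) f (Set.Icc 0 1) x * ((y - x) ^ b / b.factorial)| ≤
      L * |y - x| ^ (d + 1) := by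
  rw [CondD, if_neg s.succ_ne_zero, add_tsub_cancel_right] at h
  obtain ⟨hf, -, hlip⟩ := h
  have hcast : ((s + 1 : ℕ) : WithTop ℕ∞) - 1 = (s : WithTop ℕ∞) := rfl
  rw [hcast] at hf
  induction d generalizing a x y with
  | zero =>
    obtain rfl : a = s := by simpa using had
    have := hlip.dist_le_mul y hy x hx
    simpa [Real.dist_eq, Real.coe_toNNReal L hL] using this
  | succ d ih =>
    have hsub : Set.uIcc x y ⊆ Set.Icc (0 : ℝ) 1 := Set.uIcc_subset_Icc hx hy
    set F := fun c => iteratedDerivWithin c f (Set.Icc (0 : ℝ) 1) with hF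
    set g : ℝ → ℝ := fun z => F a z - ∑ b ∈ range (d + 2), F (a + b) x * ((z - x) ^ b / b.factorial)
      with hg
    have hderiv : ∀ z ∈ Set.uIcc x y, HasDerivWithinAt g (F (a + 1) z - ∑ b ∈ range (d + 1),
        F (a + 1 + b) x * ((z - x) ^ b / b.factorial)) (Set.uIcc x y) z := by
      intro z hz
      have h1 : HasDerivWithinAt (F a) (F (a + 1) z) (Set.uIcc x y) z := by
        have hd := (hf.differentiableOn_iteratedDerivWithin (m := a)
          (by exact_mod_cast (by omega : a < s)) (uniqueDiffOn_Icc zero_lt_one)) z (hsub hz)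
        simp only [hF, iteratedDerivWithin_succ]
        exact hd.hasDerivWithinAt.mono hsub
      have h2 : HasDerivWithinAt
          (fun z => ∑ b ∈ range (d + 2), F (a + b) x * ((z - x) ^ b / b.factorial))
          (∑ b ∈ range (d + 1), F (a + 1 + b) x * ((z - x) ^ b / b.factorial))
          (Set.uIcc x y) z := by
        simp only [sum_range_succ' _ (d + 1), pow_zero]
        refine HasDerivWithinAt.add_const _ (HasDerivWithinAt.fun_sum fun b _ => ?_)
        have h3 : HasDerivAt (fun z : ℝ => F (a + (b + 1)) x *
            ((z - x) ^ (b + 1) / (b + 1).factorial))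
            (F (a + (b + 1)) x * (((b + 1 : ℕ) : ℝ) * (z - x) ^ b * 1 / (b + 1).factorial)) z :=
          ((((hasDerivAt_id z).sub_const x).pow (b + 1)).div_const _).const_mul _
        convert h3.hasDerivWithinAt using 1
        rw [Nat.factorial_succ, add_assoc a 1 b, add_comm 1 b]
        push_cast
        field_simp
      exact h1.sub h2
    have hbound : ∀ z ∈ Set.uIcc x y, ‖F (a + 1) z - ∑ b ∈ range (d + 1),
        F (a + 1 + b) x * ((z - x) ^ b / b.factorial)‖ ≤ L * |y - x| ^ (d + 1) := by
      intro z hz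
      refine (ih (a := a + 1) (by omega) hx (hsub hz)).trans ?_
      gcongr ?_ * ?_ ^ _
      exact Set.abs_sub_left_of_mem_uIcc hz
    have hmv := (convex_uIcc x y).norm_image_sub_le_of_norm_hasDerivWithin_le hderiv hbound
      Set.left_mem_uIcc Set.right_mem_uIcc
    have hgx : g x = 0 := by simp [hg, sum_range_succ' _ (d + 1)]
    rw [hgx, sub_zero, Real.norm_eq_abs, Real.norm_eq_abs, mul_assoc, ← pow_succ] at hmv
    exact hmv

theorem sum_taylor_recenter (s : ℕ) (u : ℕ → ℝ) (v w : ℝ) :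
    ∑ a ∈ range s, (∑ b ∈ range (s - a), u (a + b) * (v ^ b / b.factorial)) / a.factorial * w ^ a =
      ∑ c ∈ range s, u c / c.factorial * (w + v) ^ c := by
  have h := sum_range_diag_flip s
    (fun a b => u (a + b) * (v ^ b / b.factorial) / a.factorial * w ^ a)
  simp only [sum_div, sum_mul]
  rw [← h]
  refine sum_congr rfl fun c _ => ?_
  rw [add_pow, mul_sum]
  refine sum_congr rfl fun k hk => ?_
  have hkc : k ≤ c := by grind
  rw [Nat.add_sub_cancel' hkc, Nat.cast_choose ℝ hkc]
  field_simp

/-- Expansion of a function satisfying `D_s` around a moving point `x`, after removal of its Taylor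
polynomial at a fixed point `p`. -/
theorem CondD.exists_taylor_decomposition {s : ℕ} {L : ℝ} (hL : 0 ≤ L) {f : ℝ → ℝ}
    (h : CondD s L f) {p : ℝ} (hp : p ∈ Set.Icc (0 : ℝ) 1) :
    ∃ (A : ℕ → ℝ) (R : ℕ → ℝ → ℝ), (∀ a < s, |A a| ≤ L) ∧
      (∀ a < s, ∀ x ∈ Set.Icc (0 : ℝ) 1, |R a x| ≤ L * |x - p| ^ (s - a)) ∧
      |f p - ∑ a ∈ range s, A a * 0 ^ a| ≤ L * 0 ^ s ∧
      ∀ x ∈ Set.Icc (0 : ℝ) 1, ∀ y ∈ Set.Icc (0 : ℝ) 1,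
        |f y - (∑ a ∈ range s, A a * (y - p) ^ a + ∑ a ∈ range s, R a x * (y - x) ^ a)| ≤
          L * |y - x| ^ s := by
  rcases s with - | s
  · rw [CondD, if_pos rfl] at h
    exact ⟨0, 0, by simp, by simp, by simpa using h.2 p hp, fun x _ y hy => by simpa using h.2 y hy⟩
  have hbd : ∀ a ≤ s, ∀ x ∈ Set.Icc (0 : ℝ) 1,
      |iteratedDerivWithin a f (Set.Icc 0 1) x| ≤ L := by
    have h' := h
    rw [CondD, if_neg s.succ_ne_zero, add_tsub_cancel_right] at h'
    exact h'.2.1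
  set F := fun c => iteratedDerivWithin c f (Set.Icc (0 : ℝ) 1) with hF
  have habs_div : ∀ (t : ℝ) (a : ℕ), |t / a.factorial| ≤ |t| := fun t a => by
    rw [abs_div, Nat.abs_cast]
    exact div_le_self (abs_nonneg _) (by exact_mod_cast Nat.one_le_iff_ne_zero.2 a.factorial_ne_zero)
  refine ⟨fun a => F a p / a.factorial,
    fun a x => (F a x - ∑ b ∈ range (s + 1 - a), F (a + b) p * ((x - p) ^ b / b.factorial)) /
      a.factorial, fun a ha => ?_, fun a ha x hx => ?_, ?_, fun x hx y hy => ?_⟩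
  · exact (habs_div _ _).trans (hbd a (by omega) p hp)
  · refine (habs_div _ _).trans ?_
    have := h.abs_iteratedDerivWithin_sub_taylor_le hL (d := s - a) (a := a) (by omega) hp hx
    rwa [show s - a + 1 = s + 1 - a by omega] at this
  · simp [sum_range_succ', hF]
  · have key := sum_taylor_recenter (s + 1) (fun c => F c p) (x - p) (y - x)
    rw [sub_add_sub_cancel] at key
    simp only [sub_div, sub_mul, sum_sub_distrib]
    rw [key, add_sub_cancel]
    have := h.abs_iteratedDerivWithin_sub_taylor_le hL (d := s) (a := 0) (by omega) hx hy
    simp only [iteratedDerivWithin_zero, zero_add] at this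
    convert this using 4
    simp only [hF]
    ring

end TaylorJets

section JackknifeBias

open Finset

theorem exists_abs_sum_jackCoeff_mul_centralMoment_le (k a : ℕ) :
    ∃ C : ℝ, 0 ≤ C ∧ ∀ N : ℕ, k + 1 ≤ N → ∀ p ∈ Set.Icc (0 : ℝ) 1,
      |∑ i, jackCoeff (fun i : Fin (k + 1) => N + i.val) i *
          binExp p (N + i) (fun l => ((l : ℝ) / (N + i : ℕ) - p) ^ a) - 0 ^ a| ≤
        C / (N : ℝ) ^ (k + 1) := by
  rcases a.eq_zero_or_pos with rfl | ha
  · exact ⟨0, le_rfl, fun N _ p _ => by simp [binExp_const, sum_jackCoeff]⟩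
  obtain ⟨K, hK, hmom⟩ := exists_binExp_centralMoment_eq_sum_pow a
  choose C hC hbd using fun e => exists_abs_sum_jackCoeff_div_le k (e + 1) e.succ_pos
  refine ⟨∑ l ∈ range (a / 2 + 1), K * C (a - l - 1),
    sum_nonneg fun l _ => mul_nonneg hK (hC _), fun N hN p hp => ?_⟩
  have hN0 : (0 : ℝ) < N := by exact_mod_cast (by omega : 0 < N)
  obtain ⟨b, hb, hb_eq⟩ := hmom p hp
  have h1 : ∀ i : Fin (k + 1), binExp p (N + i) (fun l => ((l : ℝ) / (N + i : ℕ) - p) ^ a) =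
      ∑ l ∈ range (a / 2 + 1), b l / ((N : ℝ) + i) ^ (a - l - 1 + 1) := by
    intro i
    have hNi : ((N + i : ℕ) : ℝ) ≠ 0 := by push_cast; positivity
    have h2 : (fun l : ℕ => ((l : ℝ) / (N + i : ℕ) - p) ^ a) =
        fun l : ℕ => (((N + i : ℕ) : ℝ) ^ a)⁻¹ * ((l : ℝ) - (N + i : ℕ) * p) ^ a := by
      funext l
      rw [← inv_pow, ← mul_pow]
      congr 1
      field_simp
    rw [h2, binExp_const_mul, hb_eq, mul_sum]
    refine sum_congr rfl fun l hl => ?_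
    have hla : l ≤ a := by grind
    rw [show a - l - 1 + 1 = a - l by grind, ← Nat.cast_add, pow_sub₀ _ hNi hla]
    field_simp
  simp only [h1, mul_sum, zero_pow ha.ne', sub_zero]
  rw [sum_comm, sum_div]
  refine (abs_sum_le_sum_abs _ _).trans (sum_le_sum fun l _ => ?_)
  have h3 : ∑ i : Fin (k + 1), jackCoeff (fun i : Fin (k + 1) => N + i.val) i *
      (b l / ((N : ℝ) + i) ^ (a - l - 1 + 1)) =
      b l * ∑ i : Fin (k + 1), jackCoeff (fun i : Fin (k + 1) => N + i.val) i /
        ((N : ℝ) + i) ^ (a - l - 1 + 1) := by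
    rw [mul_sum]
    exact sum_congr rfl fun _ _ => by ring
  rw [h3, abs_mul, mul_div_assoc]
  exact mul_le_mul (hb l) (hbd _ N hN) (abs_nonneg _) hK

theorem exists_abs_sum_jackCoeff_mul_increment_le (k a : ℕ) :
    ∃ C : ℝ, 0 ≤ C ∧ ∀ N : ℕ, k + 1 ≤ N → ∀ p ∈ Set.Icc (0 : ℝ) 1, ∀ x : ℝ,
      |∑ i, jackCoeff (fun i : Fin (k + 1) => N + i.val) i *
          binExp p i (fun l => (((l : ℝ) - i * x) / ((N : ℝ) + i)) ^ a)| * √N ^ a ≤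
        C * (1 + √N * |x - p|) ^ a := by
  choose K hK hmom using exists_binExp_centralMoment_eq_sum_pow
  choose C hC hbd using fun e => exists_abs_sum_jackCoeff_mul_pow_div_le k e a
  refine ⟨∑ b ∈ range (a + 1), ∑ l ∈ range ((a - b) / 2 + 1), a.choose b * K (a - b) * C (b + l),
    sum_nonneg fun b _ => sum_nonneg fun l _ => mul_nonneg (mul_nonneg (Nat.cast_nonneg _) (hK _))
      (hC _), fun N hN p hp x => ?_⟩
  have hN1 : (1 : ℝ) ≤ N := by exact_mod_cast (by omega : 1 ≤ N)
  have hν1 : 1 ≤ √(N : ℝ) := Real.one_le_sqrt.2 hN1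
  have hν0 : 0 < √(N : ℝ) := by linarith
  have hνsq : (N : ℝ) = √N ^ 2 := (Real.sq_sqrt (by linarith)).symm
  choose β hβ hβ_eq using fun c => hmom c p hp
  have h1 : ∀ i : Fin (k + 1),
      binExp p i (fun l => (((l : ℝ) - i * x) / ((N : ℝ) + i)) ^ a) =
      ∑ b ∈ range (a + 1), ∑ l ∈ range ((a - b) / 2 + 1),
        a.choose b * (p - x) ^ b * β (a - b) l * ((i : ℝ) ^ (b + l) / ((N : ℝ) + i) ^ a) := by
    intro i
    have h2 : (fun l : ℕ => (((l : ℝ) - i * x) / ((N : ℝ) + i)) ^ a) = fun l : ℕ =>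
        ∑ b ∈ range (a + 1), a.choose b * (p - x) ^ b * ((i : ℝ) ^ b / ((N : ℝ) + i) ^ a) *
          ((l : ℝ) - (i : ℕ) * p) ^ (a - b) := by
      funext l
      rw [div_pow, show (l : ℝ) - i * x = i * (p - x) + (l - (i : ℕ) * p) by ring, add_pow, sum_div]
      exact sum_congr rfl fun _ _ => by rw [mul_pow]; ring
    simp only [h2, binExp_sum, binExp_const_mul, hβ_eq, mul_sum]
    exact sum_congr rfl fun _ _ => sum_congr rfl fun _ _ => by rw [pow_add]; ring
  have h3 : ∑ i, jackCoeff (fun i : Fin (k + 1) => N + i.val) i *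
      binExp p i (fun l => (((l : ℝ) - i * x) / ((N : ℝ) + i)) ^ a) =
      ∑ b ∈ range (a + 1), ∑ l ∈ range ((a - b) / 2 + 1),
        a.choose b * (p - x) ^ b * β (a - b) l *
          ∑ i, jackCoeff (fun i : Fin (k + 1) => N + i.val) i *
            ((i : ℝ) ^ (b + l) / ((N : ℝ) + i) ^ a) := by
    simp only [h1, mul_sum]
    rw [sum_comm]
    refine sum_congr rfl fun b _ => ?_
    rw [sum_comm]
    exact sum_congr rfl fun _ _ => sum_congr rfl fun _ _ => by ring
  rw [h3]
  refine (mul_le_mul_of_nonneg_right ((abs_sum_le_sum_abs _ _).trans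
    (sum_le_sum fun b _ => abs_sum_le_sum_abs _ _)) (by positivity)).trans ?_
  simp only [sum_mul]
  refine sum_le_sum fun b hb => sum_le_sum fun l hl => ?_
  have hba : b ≤ a := by grind
  have hpow : (N : ℝ) ^ (b + l) / (N : ℝ) ^ a * √N ^ a ≤ √N ^ b := by
    rw [div_mul_eq_mul_div, div_le_iff₀ (by positivity)]
    calc (N : ℝ) ^ (b + l) * √N ^ a = √N ^ (2 * (b + l) + a) := by
          conv_lhs => rw [hνsq]
          rw [Real.sqrt_sq hν0.le, ← pow_mul, ← pow_add]
      _ ≤ √N ^ (b + 2 * a) := pow_le_pow_right₀ hν1 (by grind)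
      _ = √N ^ b * (N : ℝ) ^ a := by
          conv_rhs => rw [hνsq]
          rw [Real.sqrt_sq hν0.le, ← pow_mul, ← pow_add]
  have hu : √N ^ b * |x - p| ^ b ≤ (1 + √N * |x - p|) ^ a := by
    rw [← mul_pow]
    have h0 : 0 ≤ √N * |x - p| := by positivity
    exact (pow_le_pow_left₀ h0 (by linarith) b).trans (pow_le_pow_right₀ (by linarith) hba)
  rw [abs_mul, abs_mul, abs_mul, Nat.abs_cast, abs_pow, abs_sub_comm p x]
  have hKn := hK (a - b)
  have hCn := hC (b + l)
  calc (a.choose b : ℝ) * |x - p| ^ b * |β (a - b) l| *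
        |∑ i, jackCoeff (fun i : Fin (k + 1) => N + i.val) i *
            ((i : ℝ) ^ (b + l) / ((N : ℝ) + i) ^ a)| * √N ^ a
      ≤ (a.choose b : ℝ) * |x - p| ^ b * K (a - b) *
        (C (b + l) * ((N : ℝ) ^ (b + l) / (N : ℝ) ^ a)) * √N ^ a := by
        gcongr
        · exact hβ _ _
        · exact hbd _ N hN
    _ = (a.choose b : ℝ) * K (a - b) * C (b + l) *
        (((N : ℝ) ^ (b + l) / (N : ℝ) ^ a * √N ^ a) * |x - p| ^ b) := by ring
    _ ≤ (a.choose b : ℝ) * K (a - b) * C (b + l) * (√N ^ b * |x - p| ^ b) := by gcongr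
    _ ≤ (a.choose b : ℝ) * K (a - b) * C (b + l) * (1 + √N * |x - p|) ^ a := by gcongr

theorem exists_binExp_one_add_sqrt_mul_abs_pow_le (s : ℕ) :
    ∃ C : ℝ, 0 ≤ C ∧ ∀ N : ℕ, 1 ≤ N → ∀ p ∈ Set.Icc (0 : ℝ) 1,
      binExp p N (fun k => (1 + √N * |(k : ℝ) / N - p|) ^ s) ≤ C := by
  obtain ⟨K, hK, hmom⟩ := exists_binExp_centralMoment_eq_sum_pow (2 * s)
  refine ⟨2 ^ s * (1 + ∑ _l ∈ range (2 * s / 2 + 1), K), by positivity, fun N hN p hp => ?_⟩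
  have hN1 : (1 : ℝ) ≤ N := by exact_mod_cast hN
  have hN0 : (0 : ℝ) < N := by linarith
  obtain ⟨β, hβ, hβ_eq⟩ := hmom p hp
  have hpt : ∀ k ≤ N, |(1 + √N * |(k : ℝ) / N - p|) ^ s| ≤
      2 ^ s * (1 + ((N : ℝ) ^ s)⁻¹ * ((k : ℝ) - N * p) ^ (2 * s)) := by
    intro k _
    set u := √N * |(k : ℝ) / N - p| with hu
    have hu0 : 0 ≤ u := by positivity
    have hu2 : u ^ (2 * s) = ((N : ℝ) ^ s)⁻¹ * ((k : ℝ) - N * p) ^ (2 * s) := by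
      rw [pow_mul, pow_mul, hu, mul_pow, Real.sq_sqrt hN0.le, sq_abs, ← inv_pow, ← mul_pow]
      congr 1
      field_simp
    rw [← hu2, abs_of_nonneg (by positivity)]
    rcases le_total u 1 with h | h
    · calc (1 + u) ^ s ≤ 2 ^ s := by gcongr; linarith
        _ ≤ 2 ^ s * (1 + u ^ (2 * s)) :=
          le_mul_of_one_le_right (by positivity) (by linarith [pow_nonneg hu0 (2 * s)])
    · calc (1 + u) ^ s ≤ (2 * u) ^ s := by gcongr; linarith
        _ = 2 ^ s * u ^ s := mul_pow _ _ _
        _ ≤ 2 ^ s * (1 + u ^ (2 * s)) := by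
          gcongr
          linarith [pow_le_pow_right₀ h (by omega : s ≤ 2 * s)]
  refine (le_abs_self _).trans ((abs_binExp_le hp hpt).trans ?_)
  rw [binExp_const_mul, binExp_add, binExp_const, binExp_const_mul, hβ_eq, mul_sum]
  gcongr with l hl
  rw [inv_mul_le_iff₀ (by positivity), mul_comm _ K]
  refine mul_le_mul ((le_abs_self _).trans (hβ l)) (pow_le_pow_right₀ hN1 (by grind))
    (by positivity) hK

theorem exists_abs_jackknife_bias_le (k s : ℕ) {L : ℝ} (hL : 0 ≤ L) :
    ∃ C : ℝ, 0 ≤ C ∧ ∀ f : ℝ → ℝ, CondD s L f → ∀ N : ℕ, k + 1 ≤ N →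
      ∀ p ∈ Set.Icc (0 : ℝ) 1,
        |∑ i, jackCoeff (fun i : Fin (k + 1) => N + i.val) i * bernstein' (N + i) f p - f p| ≤
          C * (1 / (N : ℝ) ^ (k + 1) + 1 / √N ^ s + (N : ℝ) ^ k / (N : ℝ) ^ s) := by
  choose C₁ hC₁ h₁ using exists_abs_sum_jackCoeff_mul_centralMoment_le k
  choose C₂ hC₂ h₂ using exists_abs_sum_jackCoeff_mul_increment_le k
  obtain ⟨C₃, hC₃, h₃⟩ := exists_binExp_one_add_sqrt_mul_abs_pow_le s
  obtain ⟨C₄, hC₄, h₄⟩ := exists_sum_abs_jackCoeff_le k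
  set D₁ := ∑ a ∈ range s, L * C₁ a with hD₁
  set D₂ := (∑ a ∈ range s, L * C₂ a) * C₃ with hD₂
  set D₃ := C₄ * (L * (k : ℝ) ^ s) + L with hD₃
  have hD₁0 : 0 ≤ D₁ := sum_nonneg fun a _ => mul_nonneg hL (hC₁ a)
  have hE₂0 : 0 ≤ ∑ a ∈ range s, L * C₂ a := sum_nonneg fun a _ => mul_nonneg hL (hC₂ a)
  have hD₂0 : 0 ≤ D₂ := mul_nonneg hE₂0 hC₃
  have hD₃0 : 0 ≤ D₃ := by positivity
  refine ⟨D₁ + D₂ + D₃, by positivity, fun f hf N hN p hp => ?_⟩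
  have hN1 : (1 : ℝ) ≤ N := by exact_mod_cast (by omega : 1 ≤ N)
  have hN0 : (0 : ℝ) < N := by linarith
  obtain ⟨A, R, hA, hR, hfp, hrem⟩ := hf.exists_taylor_decomposition hL hp
  set J := jackCoeff (fun i : Fin (k + 1) => N + i.val) with hJ
  set ρ : ℝ → ℝ → ℝ := fun x y =>
    f y - (∑ a ∈ range s, A a * (y - p) ^ a + ∑ a ∈ range s, R a x * (y - x) ^ a) with hρ
  set M : Fin (k + 1) → ℕ → ℝ := fun i a =>
    binExp p (N + i) (fun l => ((l : ℝ) / (N + i : ℕ) - p) ^ a) with hM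
  set V : Fin (k + 1) → ℕ → ℝ → ℝ := fun i a x =>
    binExp p i (fun l => (((l : ℝ) - i * x) / ((N : ℝ) + i)) ^ a) with hV
  set ε : Fin (k + 1) → ℝ := fun i => binExp p N fun m => binExp p i fun l =>
    ρ ((m : ℝ) / N) (((m + l : ℕ) : ℝ) / (N + i : ℕ)) with hε
  have hinc : ∀ (i : Fin (k + 1)) (m l : ℕ), ((m + l : ℕ) : ℝ) / (N + i : ℕ) - (m : ℝ) / N =
      ((l : ℝ) - i * ((m : ℝ) / N)) / ((N : ℝ) + i) := by
    intro i m l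
    have hNi : (N : ℝ) + i ≠ 0 := by positivity
    push_cast
    field_simp
    ring
  have hB : ∀ i : Fin (k + 1), bernstein' (N + i) f p = ∑ a ∈ range s, A a * M i a +
      binExp p N (fun m => ∑ a ∈ range s, R a ((m : ℝ) / N) * V i a ((m : ℝ) / N)) + ε i := by
    intro i
    have e1 : bernstein' (N + i) f p =
        binExp p (N + i) (fun l => ∑ a ∈ range s, A a * ((l : ℝ) / (N + i : ℕ) - p) ^ a +
          (f ((l : ℝ) / (N + i : ℕ)) -
            ∑ a ∈ range s, A a * ((l : ℝ) / (N + i : ℕ) - p) ^ a)) := by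
      simp only [add_sub_cancel]
      rfl
    have e2 : ∀ m l : ℕ, f (((m + l : ℕ) : ℝ) / (N + i : ℕ)) -
        ∑ a ∈ range s, A a * (((m + l : ℕ) : ℝ) / (N + i : ℕ) - p) ^ a =
        ∑ a ∈ range s, R a ((m : ℝ) / N) *
          (((l : ℝ) - i * ((m : ℝ) / N)) / ((N : ℝ) + i)) ^ a +
        ρ ((m : ℝ) / N) (((m + l : ℕ) : ℝ) / (N + i : ℕ)) := by
      intro m l
      rw [hρ, ← hinc]
      ring
    rw [e1, binExp_add, binExp_add_index p N i (fun l => f ((l : ℝ) / (N + i : ℕ)) -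
      ∑ a ∈ range s, A a * ((l : ℝ) / (N + i : ℕ) - p) ^ a)]
    simp only [e2, binExp_add, binExp_sum, binExp_const_mul]
    rw [← add_assoc]
  have hsplit : ∑ i, J i * bernstein' (N + i) f p - f p =
      ∑ a ∈ range s, A a * (∑ i, J i * M i a - 0 ^ a) +
      binExp p N (fun m => ∑ a ∈ range s, R a ((m : ℝ) / N) * ∑ i, J i * V i a ((m : ℝ) / N)) +
      ∑ i, J i * ε i - (f p - ∑ a ∈ range s, A a * 0 ^ a) := by
    have e1 : ∑ a ∈ range s, A a * (∑ i, J i * M i a - 0 ^ a) =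
        ∑ i, J i * ∑ a ∈ range s, A a * M i a - ∑ a ∈ range s, A a * 0 ^ a := by
      simp only [mul_sub, sum_sub_distrib, mul_sum]
      rw [sum_comm]
      simp only [mul_left_comm]
    have e2 : binExp p N (fun m => ∑ a ∈ range s, R a ((m : ℝ) / N) *
          ∑ i, J i * V i a ((m : ℝ) / N)) =
        ∑ i, J i * binExp p N (fun m => ∑ a ∈ range s, R a ((m : ℝ) / N) *
          V i a ((m : ℝ) / N)) := by
      simp only [← binExp_const_mul, ← binExp_sum, mul_sum]
      congr 1
      funext m
      rw [sum_comm]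
      exact sum_congr rfl fun _ _ => sum_congr rfl fun _ _ => by ring
    simp only [hB, mul_add, sum_add_distrib]
    rw [e1, e2]
    ring
  have b1 : |∑ a ∈ range s, A a * (∑ i, J i * M i a - 0 ^ a)| ≤ D₁ * (1 / (N : ℝ) ^ (k + 1)) := by
    rw [hD₁, sum_mul]
    refine (abs_sum_le_sum_abs _ _).trans (sum_le_sum fun a ha => ?_)
    rw [abs_mul, mul_assoc, mul_one_div]
    exact mul_le_mul (hA a (by grind)) (h₁ a N hN p hp) (abs_nonneg _) hL
  have b2 : |binExp p N (fun m => ∑ a ∈ range s, R a ((m : ℝ) / N) *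
      ∑ i, J i * V i a ((m : ℝ) / N))| ≤ D₂ * (1 / √N ^ s) := by
    have hpt : ∀ m ≤ N, |∑ a ∈ range s, R a ((m : ℝ) / N) * ∑ i, J i * V i a ((m : ℝ) / N)| ≤
        (∑ a ∈ range s, L * C₂ a) * (1 / √N ^ s) * (1 + √N * |(m : ℝ) / N - p|) ^ s := by
      intro m hm
      have hx : (m : ℝ) / N ∈ Set.Icc (0 : ℝ) 1 :=
        ⟨by positivity, (div_le_one hN0).2 (by exact_mod_cast hm)⟩
      set x := (m : ℝ) / N
      set u := √N * |x - p| with hu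
      have hu0 : 0 ≤ u := by positivity
      rw [sum_mul, sum_mul]
      refine (abs_sum_le_sum_abs _ _).trans (sum_le_sum fun a ha => ?_)
      have has : a < s := by grind
      have hr : |R a x| * √N ^ (s - a) ≤ L * (1 + u) ^ (s - a) := by
        calc |R a x| * √N ^ (s - a) ≤ L * |x - p| ^ (s - a) * √N ^ (s - a) := by
              gcongr
              exact hR a has x hx
          _ = L * u ^ (s - a) := by rw [hu, mul_pow]; ring
          _ ≤ L * (1 + u) ^ (s - a) := by gcongr; linarith
      have hv := h₂ a N hN p hp x
      rw [mul_one_div, div_mul_eq_mul_div, le_div_iff₀ (by positivity), abs_mul]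
      have hs : s = (s - a) + a := by omega
      calc |R a x| * |∑ i, J i * V i a x| * √N ^ s
          = (|R a x| * √N ^ (s - a)) * (|∑ i, J i * V i a x| * √N ^ a) := by
            conv_lhs => rw [hs, pow_add]
            ring
        _ ≤ (L * (1 + u) ^ (s - a)) * (C₂ a * (1 + u) ^ a) :=
            mul_le_mul hr hv (by positivity) (by positivity)
        _ = L * C₂ a * (1 + u) ^ s := by
            conv_rhs => rw [hs, pow_add]
            ring
    refine (abs_binExp_le hp hpt).trans ?_
    rw [binExp_const_mul, hD₂, mul_right_comm _ C₃]
    gcongr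
    exact h₃ N (by omega) p hp
  have b3 : |∑ i, J i * ε i| ≤ C₄ * (L * (k : ℝ) ^ s) * ((N : ℝ) ^ k / (N : ℝ) ^ s) := by
    have hεi : ∀ i, |ε i| ≤ L * ((k : ℝ) / N) ^ s := by
      intro i
      have hpt : ∀ m ≤ N, ∀ l ≤ (i : ℕ),
          |ρ ((m : ℝ) / N) (((m + l : ℕ) : ℝ) / (N + i : ℕ))| ≤ L * ((k : ℝ) / N) ^ s := by
        intro m hm l hl
        have hx : (m : ℝ) / N ∈ Set.Icc (0 : ℝ) 1 :=
          ⟨by positivity, (div_le_one hN0).2 (by exact_mod_cast hm)⟩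
        have hy : ((m + l : ℕ) : ℝ) / (N + i : ℕ) ∈ Set.Icc (0 : ℝ) 1 :=
          ⟨by positivity, div_le_one_of_le₀ (by exact_mod_cast add_le_add hm hl) (by positivity)⟩
        refine (hrem _ hx _ hy).trans ?_
        gcongr
        have hlR : (l : ℝ) ≤ i := by exact_mod_cast hl
        have hik : (i : ℝ) ≤ k := by exact_mod_cast (by omega : (i : ℕ) ≤ k)
        rw [hinc, abs_div, abs_of_pos (by positivity : (0 : ℝ) < N + i)]
        refine div_le_div₀ (by positivity) ?_ hN0 (by linarith [(Nat.cast_nonneg i.val : (0 : ℝ) ≤ _)])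
        have h5 : 0 ≤ (i : ℝ) * ((m : ℝ) / N) := mul_nonneg (by positivity) hx.1
        have h6 : (i : ℝ) * ((m : ℝ) / N) ≤ i := mul_le_of_le_one_right (by positivity) hx.2
        rw [abs_le]
        constructor <;> linarith [(Nat.cast_nonneg l : (0 : ℝ) ≤ l)]
      refine (abs_binExp_le hp (h := fun _ => L * ((k : ℝ) / N) ^ s) fun m hm => ?_).trans
        (binExp_const _ _ _).le
      exact (abs_binExp_le hp (hpt m hm)).trans (binExp_const _ _ _).le
    calc |∑ i, J i * ε i| ≤ ∑ i, |J i| * (L * ((k : ℝ) / N) ^ s) := by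
          refine (abs_sum_le_sum_abs _ _).trans (sum_le_sum fun i _ => ?_)
          rw [abs_mul]
          gcongr
          exact hεi i
      _ = (∑ i, |J i|) * (L * ((k : ℝ) / N) ^ s) := by rw [sum_mul]
      _ ≤ (C₄ * (N : ℝ) ^ k) * (L * ((k : ℝ) / N) ^ s) := by
          gcongr
          exact h₄ N hN
      _ = C₄ * (L * (k : ℝ) ^ s) * ((N : ℝ) ^ k / (N : ℝ) ^ s) := by rw [div_pow]; ring
  have b4 : |f p - ∑ a ∈ range s, A a * 0 ^ a| ≤ L * ((N : ℝ) ^ k / (N : ℝ) ^ s) := by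
    refine hfp.trans (mul_le_mul_of_nonneg_left ?_ hL)
    rcases s.eq_zero_or_pos with rfl | hs
    · simpa using one_le_pow₀ hN1
    · rw [zero_pow hs.ne']
      positivity
  have q1 : 0 ≤ 1 / (N : ℝ) ^ (k + 1) := by positivity
  have q2 : 0 ≤ 1 / √(N : ℝ) ^ s := by positivity
  have q3 : 0 ≤ (N : ℝ) ^ k / (N : ℝ) ^ s := by positivity
  rw [hsplit]
  refine (abs_sub _ _).trans ?_
  refine (add_le_add ((abs_add_le _ _).trans (add_le_add ((abs_add_le _ _).trans
    (add_le_add b1 b2)) b3)) b4).trans ?_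
  rw [add_assoc (D₁ * _ + _), ← add_mul, ← hD₃]
  calc D₁ * (1 / (N : ℝ) ^ (k + 1)) + D₂ * (1 / √N ^ s) + D₃ * ((N : ℝ) ^ k / (N : ℝ) ^ s)
      ≤ (D₁ + D₂ + D₃) * (1 / (N : ℝ) ^ (k + 1)) + (D₁ + D₂ + D₃) * (1 / √N ^ s) +
        (D₁ + D₂ + D₃) * ((N : ℝ) ^ k / (N : ℝ) ^ s) := by
        gcongr <;> linarith
    _ = _ := by ring

theorem exists_jackBias_le (k s : ℕ) {L : ℝ} (hL : 0 ≤ L) :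
    ∃ C : ℝ, 0 ≤ C ∧ ∀ f : ℝ → ℝ, CondD s L f → ∀ n : ℕ, 2 * (k + 1) ≤ n →
      jackBias (fun i : Fin (k + 1) => n - (k + 1) + 1 + i.val) f ≤
        C * ((n : ℝ) ^ (-(k + 1 : ℝ)) + (n : ℝ) ^ (-(s / 2 : ℝ)) + (n : ℝ) ^ ((k : ℝ) - s)) := by
  obtain ⟨C, hC, h⟩ := exists_abs_jackknife_bias_le k s hL
  refine ⟨C * 2 ^ (k + 1 + s), by positivity, fun f hf n hn => ?_⟩
  obtain ⟨N, hNdef⟩ : ∃ N, n - (k + 1) + 1 = N := ⟨_, rfl⟩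
  have hN : k + 1 ≤ N := by omega
  have hn0 : (0 : ℝ) < n := by exact_mod_cast (by omega : 0 < n)
  have hN0 : (0 : ℝ) < N := by exact_mod_cast (by omega : 0 < N)
  have hNn : (N : ℝ) ≤ n := by exact_mod_cast (by omega : N ≤ n)
  have hnN : (n : ℝ) ≤ 2 * N := by exact_mod_cast (by omega : n ≤ 2 * N)
  have hinv : ∀ e : ℕ, 1 / (N : ℝ) ^ e ≤ 2 ^ e / (n : ℝ) ^ e := fun e => by
    rw [div_le_div_iff₀ (by positivity) (by positivity), one_mul, ← mul_pow]
    gcongr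
  have hle2 : ∀ e : ℕ, e ≤ k + 1 + s → (2 : ℝ) ^ e ≤ 2 ^ (k + 1 + s) := fun e he =>
    pow_le_pow_right₀ one_le_two he
  have t1 : 1 / (N : ℝ) ^ (k + 1) ≤ 2 ^ (k + 1 + s) * (n : ℝ) ^ (-(k + 1 : ℝ)) := by
    rw [Real.rpow_neg hn0.le, ← Nat.cast_succ, Real.rpow_natCast, ← div_eq_mul_inv]
    exact (hinv _).trans (div_le_div_of_nonneg_right (hle2 _ (by omega)) (by positivity))
  have t2 : 1 / √(N : ℝ) ^ s ≤ 2 ^ (k + 1 + s) * (n : ℝ) ^ (-(s / 2 : ℝ)) := by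
    have hs : (n : ℝ) ^ (s / 2 : ℝ) = √n ^ s := by
      rw [Real.sqrt_eq_rpow, ← Real.rpow_natCast, ← Real.rpow_mul hn0.le]
      ring_nf
    have hsq : √(n : ℝ) ≤ 2 * √N := by
      rw [Real.sqrt_le_left (by positivity), mul_pow, Real.sq_sqrt hN0.le]
      linarith
    rw [Real.rpow_neg hn0.le, hs, ← div_eq_mul_inv, div_le_div_iff₀ (by positivity) (by positivity),
      one_mul]
    calc √(n : ℝ) ^ s ≤ (2 * √N) ^ s := by gcongr
      _ = 2 ^ s * √N ^ s := mul_pow _ _ _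
      _ ≤ 2 ^ (k + 1 + s) * √N ^ s := by
        exact mul_le_mul_of_nonneg_right (hle2 s (by omega)) (by positivity)
  have t3 : (N : ℝ) ^ k / (N : ℝ) ^ s ≤ 2 ^ (k + 1 + s) * (n : ℝ) ^ ((k : ℝ) - s) := by
    rw [Real.rpow_sub hn0, Real.rpow_natCast, Real.rpow_natCast]
    calc (N : ℝ) ^ k / (N : ℝ) ^ s = (N : ℝ) ^ k * (1 / (N : ℝ) ^ s) := by ring
      _ ≤ (n : ℝ) ^ k * (2 ^ s / (n : ℝ) ^ s) := by
        exact mul_le_mul (pow_le_pow_left₀ hN0.le hNn k) (hinv s) (by positivity) (by positivity)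
      _ = 2 ^ s * ((n : ℝ) ^ k / (n : ℝ) ^ s) := by ring
      _ ≤ 2 ^ (k + 1 + s) * ((n : ℝ) ^ k / (n : ℝ) ^ s) := by
        exact mul_le_mul_of_nonneg_right (hle2 s (by omega)) (by positivity)
  rw [hNdef]
  refine csSup_le (Set.Nonempty.image _ ⟨0, by simp⟩) ?_
  rintro _ ⟨p, hp, rfl⟩
  refine (h f hf N hN p hp).trans ?_
  rw [mul_assoc]
  gcongr
  linarith

end JackknifeBias

/-- upper bounds on the delete-1 `r`-jackknife bias for `f` satisfying
condition `D_s` with parameter `L`: `O(n^{r-s-1})` for `0 ≤ s ≤ 2r-2`, `O(n^{-(r-1/2)})`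
for `s = 2r-1`, and `O(n^{-r})` for `s ≥ 2r`. -/
theorem delete_one_jackknife_Ds_upper (r s : ℕ) (hr : 1 ≤ r) (L : ℝ) (hL : 0 < L) :
    ∃ c > 0, ∀ f : ℝ → ℝ, CondD s L f → ∀ n : ℕ, 2 * r ≤ n →
      (s ≤ 2 * r - 2 →
        jackBias (fun i : Fin r => n - r + 1 + i.val) f ≤
          c * (n : ℝ) ^ ((r : ℝ) - (s : ℝ) - 1)) ∧
      (s = 2 * r - 1 →
        jackBias (fun i : Fin r => n - r + 1 + i.val) f ≤
          c * (n : ℝ) ^ (-((r : ℝ) - 1 / 2))) ∧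
      (2 * r ≤ s →
        jackBias (fun i : Fin r => n - r + 1 + i.val) f ≤
          c * (n : ℝ) ^ (-(r : ℝ))) := by
  obtain ⟨k, rfl⟩ : ∃ k, r = k + 1 := ⟨r - 1, by omega⟩
  obtain ⟨C, hC, h⟩ := exists_jackBias_le k s hL.le
  refine ⟨3 * C + 1, by positivity, fun f hf n hn => ?_⟩
  have hn1 : (1 : ℝ) ≤ n := by exact_mod_cast (by omega : 1 ≤ n)
  have hbias : ∀ e : ℝ, -(k + 1 : ℝ) ≤ e → -(s / 2 : ℝ) ≤ e → (k : ℝ) - s ≤ e →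
      jackBias (fun i : Fin (k + 1) => n - (k + 1) + 1 + i.val) f ≤ (3 * C + 1) * (n : ℝ) ^ e := by
    intro e h1 h2 h3
    have hpow := Real.rpow_nonneg (zero_le_one.trans hn1) e
    calc jackBias (fun i : Fin (k + 1) => n - (k + 1) + 1 + i.val) f
        ≤ C * ((n : ℝ) ^ (-(k + 1 : ℝ)) + (n : ℝ) ^ (-(s / 2 : ℝ)) + (n : ℝ) ^ ((k : ℝ) - s)) :=
          h f hf n hn
      _ ≤ C * ((n : ℝ) ^ e + (n : ℝ) ^ e + (n : ℝ) ^ e) := by gcongr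
      _ ≤ (3 * C + 1) * (n : ℝ) ^ e := by linarith
  refine ⟨fun hs => hbias _ ?_ ?_ ?_, fun hs => hbias _ ?_ ?_ ?_, fun hs => hbias _ ?_ ?_ ?_⟩
  iterate 3
    have hs' : (s : ℝ) ≤ 2 * k := by exact_mod_cast (by omega : s ≤ 2 * k)
    push_cast
    linarith
  iterate 3
    have hs' : (s : ℝ) = 2 * k + 1 := by exact_mod_cast (by omega : s = 2 * k + 1)
    push_cast
    linarith
  iterate 3
    have hs' : 2 * (k : ℝ) + 2 ≤ s := by exact_mod_cast (by omega : 2 * k + 2 ≤ s)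
    push_cast
    linarith
end

section
/- There exists a universal constant c > 0 such that for all integers 2 ≤ n_1 < n_2, with jackknife coefficients C_1 = n_1/(n_1 − n_2) and C_2 = n_2/(n_2 − n_1): (i) for f(p) = −p ln p (with f(0) = 0), sup_{p∈[0,1]} |C_1 B_{n_1}[f](p) + C_2 B_{n_2}[f](p) − f(p)| ≤ c/n_2; (ii) for each 0 < α < 1 there exists a constant c(α) > 0 such that for f(p) = p^α, sup_{p∈[0,1]} |C_1 B_{n_1}[f](p) + C_2 B_{n_2}[f](p) − f(p)| ≤ c(α)/n_2^α. -/
/-- Sup over `p ∈ [0,1]` of the 2-jackknife bias with sample sizes `n₁ < n₂` and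
coefficients `C₁ = n₁/(n₁−n₂)`, `C₂ = n₂/(n₂−n₁)`. -/
noncomputable def jack2Bias (n₁ n₂ : ℕ) (f : ℝ → ℝ) : ℝ :=
  sSup ((fun p =>
    |((n₁ : ℝ) / ((n₁ : ℝ) - (n₂ : ℝ))) * bernstein' n₁ f p +
      ((n₂ : ℝ) / ((n₂ : ℝ) - (n₁ : ℝ))) * bernstein' n₂ f p - f p|) '' Set.Icc (0:ℝ) 1)

/-- The mean of `g` under the binomial distribution with parameters `n` and `p`. -/
noncomputable def binomialMean (n : ℕ) (p : ℝ) (g : ℕ → ℝ) : ℝ :=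
  ∑ k ∈ Finset.range (n + 1), (n.choose k : ℝ) * p ^ k * (1 - p) ^ (n - k) * g k

section BinomialMean

variable {n : ℕ} {p : ℝ}

theorem bernstein'_eq_binomialMean (n : ℕ) (f : ℝ → ℝ) (p : ℝ) :
    bernstein' n f p = binomialMean n p fun k => f (k / n) := rfl

theorem binomialMean_add (g h : ℕ → ℝ) :
    binomialMean n p (fun k => g k + h k) = binomialMean n p g + binomialMean n p h := by
  simp only [binomialMean, ← Finset.sum_add_distrib, mul_add]

theorem binomialMean_sub (g h : ℕ → ℝ) :
    binomialMean n p (fun k => g k - h k) = binomialMean n p g - binomialMean n p h := by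
  simp only [binomialMean, ← Finset.sum_sub_distrib, mul_sub]

theorem binomialMean_const_mul (c : ℝ) (g : ℕ → ℝ) :
    binomialMean n p (fun k => c * g k) = c * binomialMean n p g := by
  simp only [binomialMean, Finset.mul_sum]
  exact Finset.sum_congr rfl fun _ _ => by ring

theorem binomialMean_const (n : ℕ) (p c : ℝ) : binomialMean n p (fun _ => c) = c := by
  have h := add_pow p (1 - p) n
  simp only [add_sub_cancel, one_pow] at h
  rw [binomialMean, ← Finset.sum_mul]
  rw [Finset.sum_congr rfl fun k _ => show
    (n.choose k : ℝ) * p ^ k * (1 - p) ^ (n - k) = p ^ k * (1 - p) ^ (n - k) * n.choose k by ring,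
    ← h, one_mul]

theorem binomialMean_mono (hp : p ∈ Set.Icc (0 : ℝ) 1) {g h : ℕ → ℝ} (hgh : ∀ k, g k ≤ h k) :
    binomialMean n p g ≤ binomialMean n p h := by
  have h0 := hp.1
  have h1 : 0 ≤ 1 - p := sub_nonneg.2 hp.2
  exact Finset.sum_le_sum fun k _ => mul_le_mul_of_nonneg_left (hgh k) (by positivity)

/-- Conditioning on the last of `n + 1` trials. -/
theorem binomialMean_succ (n : ℕ) (p : ℝ) (g : ℕ → ℝ) :
    binomialMean (n + 1) p g =
      binomialMean n p g + p * binomialMean n p (fun k => g (k + 1) - g k) := by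
  have e : binomialMean n p g = (1 - p) ^ n * g 0 +
      ∑ k ∈ Finset.range (n + 1), (n.choose (k + 1) : ℝ) * p ^ (k + 1) *
        (1 - p) ^ (n - (k + 1)) * g (k + 1) := by
    rw [Finset.sum_range_succ, binomialMean, Finset.sum_range_succ']
    simp [add_comm]
  have e' : (1 - p) * binomialMean n p g = (1 - p) ^ (n + 1) * g 0 +
      ∑ k ∈ Finset.range (n + 1), (n.choose (k + 1) : ℝ) * p ^ (k + 1) *
        (1 - p) ^ (n - k) * g (k + 1) := by
    rw [e, mul_add, Finset.mul_sum]
    congr 1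
    · ring
    · refine Finset.sum_congr rfl fun k hk => ?_
      rcases (Nat.lt_succ_iff.1 (Finset.mem_range.1 hk)).eq_or_lt with rfl | h
      · simp
      · rw [show n - k = (n - (k + 1)) + 1 by omega]
        ring
  rw [binomialMean_sub, show ∀ a b : ℝ, a + p * (b - a) = (1 - p) * a + p * b by intros; ring, e',
    binomialMean, binomialMean, Finset.sum_range_succ', Finset.mul_sum, add_assoc,
    ← Finset.sum_add_distrib, add_comm (Finset.sum _ _)]
  simp only [Nat.choose_zero_right, Nat.cast_one, pow_zero, one_mul, tsub_zero]
  congr 1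
  refine Finset.sum_congr rfl fun k _ => ?_
  rw [Nat.choose_succ_succ', Nat.add_sub_add_right]
  push_cast
  ring

theorem binomialMean_id (n : ℕ) (p : ℝ) : binomialMean n p (fun k => (k : ℝ)) = n * p := by
  induction n with
  | zero => simp [binomialMean]
  | succ n ih =>
    rw [binomialMean_succ, ih]
    simp only [Nat.cast_add, Nat.cast_one, add_sub_cancel_left, binomialMean_const]
    ring

theorem binomialMean_sq (n : ℕ) (p : ℝ) :
    binomialMean n p (fun k => (k : ℝ) ^ 2) = n * p * (1 - p) + (n * p) ^ 2 := by
  induction n with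
  | zero => simp [binomialMean]
  | succ n ih =>
    rw [binomialMean_succ, ih]
    have : ∀ k : ℕ, ((k + 1 : ℕ) : ℝ) ^ 2 - (k : ℝ) ^ 2 = 2 * k + 1 := fun k => by
      push_cast; ring
    simp only [this]
    rw [binomialMean_add, binomialMean_const_mul, binomialMean_id, binomialMean_const]
    push_cast
    ring

theorem mul_binomialMean_shift (n : ℕ) (p : ℝ) (g : ℕ → ℝ) :
    ((n : ℝ) + 1) * p * binomialMean n p (fun k => g (k + 1)) =
      binomialMean (n + 1) p (fun k => k * g k) := by
  rw [binomialMean, binomialMean, Finset.sum_range_succ' _ (n + 1), Finset.mul_sum]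
  simp only [Nat.cast_zero, zero_mul, mul_zero, add_zero]
  refine Finset.sum_congr rfl fun k _ => ?_
  have h : ((n : ℝ) + 1) * n.choose k = (n + 1).choose (k + 1) * (k + 1) := by
    exact_mod_cast Nat.add_one_mul_choose_eq n k
  rw [Nat.add_sub_add_right]
  push_cast
  linear_combination p ^ (k + 1) * (1 - p) ^ (n - k) * g (k + 1) * h

theorem mul_binomialMean_inv_succ_le (n : ℕ) (hp : p ∈ Set.Icc (0 : ℝ) 1) :
    ((n : ℝ) + 1) * p * binomialMean n p (fun k => ((k : ℝ) + 1)⁻¹) ≤ 1 := by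
  have h := mul_binomialMean_shift n p (fun k => (k : ℝ)⁻¹)
  push_cast at h
  rw [h, ← binomialMean_const (n + 1) p 1]
  exact binomialMean_mono hp fun k => mul_inv_le_one

end BinomialMean

/-- A function whose Bernstein bias is `O(n ^ (-α))`, with increments of `n` times the bias of the
same order, has 2-jackknife bias `O(n₂ ^ (-α))`. -/
theorem jack2Bias_le_of_bernstein'_bias {f : ℝ → ℝ} {α c : ℝ} (hα0 : 0 ≤ α) (hα1 : α ≤ 1)
    (hbias : ∀ n : ℕ, 1 ≤ n → ∀ p ∈ Set.Icc (0 : ℝ) 1,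
      |bernstein' n f p - f p| ≤ c / (n : ℝ) ^ α)
    (hstep : ∀ n : ℕ, 1 ≤ n → ∀ p ∈ Set.Icc (0 : ℝ) 1,
      |((n : ℝ) + 1) * (bernstein' (n + 1) f p - f p) - n * (bernstein' n f p - f p)| ≤
        c / ((n : ℝ) + 1) ^ α)
    {n₁ n₂ : ℕ} (h1 : 1 ≤ n₁) (h12 : n₁ < n₂) :
    jack2Bias n₁ n₂ f ≤ 4 * c / (n₂ : ℝ) ^ α := by
  have hn1 : (0 : ℝ) < n₁ := by exact_mod_cast h1
  have hn12 : (n₁ : ℝ) < n₂ := by exact_mod_cast h12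
  have hn2 : (0 : ℝ) < n₂ := hn1.trans hn12
  have hc : 0 ≤ c := by
    have h := (abs_nonneg _).trans (hbias 1 le_rfl 0 (by simp))
    simpa using h
  refine csSup_le ((Set.nonempty_Icc.2 zero_le_one).image _) ?_
  rintro _ ⟨p, hp, rfl⟩
  let h : ℕ → ℝ := fun n => n * (bernstein' n f p - f p)
  have hd : (0 : ℝ) < n₂ - n₁ := sub_pos.2 hn12
  have key : (n₁ : ℝ) / ((n₁ : ℝ) - n₂) * bernstein' n₁ f p +
      (n₂ : ℝ) / ((n₂ : ℝ) - n₁) * bernstein' n₂ f p - f p = (h n₂ - h n₁) / (n₂ - n₁) := by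
    have : (n₁ : ℝ) - n₂ ≠ 0 := by linarith
    rw [← neg_sub (n₂ : ℝ) n₁, div_neg]
    simp only [h]
    field_simp
    ring
  simp only [key]
  rw [abs_div, abs_of_pos hd, div_le_iff₀ hd]
  rcases le_total (2 * (n₁ : ℝ)) n₂ with hcase | hcase
  · have hb : ∀ n : ℕ, 1 ≤ n → n ≤ n₂ → |h n| ≤ n₂ * (c / (n₂ : ℝ) ^ α) := by
      intro n hn hnn
      have hn' : (0 : ℝ) < n := by exact_mod_cast hn
      have hnn' : (n : ℝ) ≤ n₂ := by exact_mod_cast hnn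
      have e : ∀ x : ℝ, 0 < x → x * (c / x ^ α) = c * x ^ (1 - α) := fun x hx => by
        rw [Real.rpow_sub hx, Real.rpow_one]; ring
      calc |h n| = n * |bernstein' n f p - f p| := by simp only [h, abs_mul, Nat.abs_cast]
        _ ≤ n * (c / (n : ℝ) ^ α) := mul_le_mul_of_nonneg_left (hbias n hn p hp) hn'.le
        _ ≤ n₂ * (c / (n₂ : ℝ) ^ α) := by
          rw [e _ hn', e _ hn2]
          exact mul_le_mul_of_nonneg_left
            (Real.rpow_le_rpow hn'.le hnn' (sub_nonneg.2 hα1)) hc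
    have h0 : 0 ≤ c / (n₂ : ℝ) ^ α := by positivity
    calc |h n₂ - h n₁| ≤ |h n₂| + |h n₁| := abs_sub _ _
      _ ≤ n₂ * (c / (n₂ : ℝ) ^ α) + n₂ * (c / (n₂ : ℝ) ^ α) :=
        add_le_add (hb _ (h1.trans h12.le) le_rfl) (hb _ h1 h12.le)
      _ ≤ 4 * c / (n₂ : ℝ) ^ α * (n₂ - n₁) := by
        rw [mul_div_assoc]
        nlinarith
  · have hs : ∀ m : ℕ, |h (n₁ + m) - h n₁| ≤ m * (c / (n₁ : ℝ) ^ α) := by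
      intro m
      induction m with
      | zero => simp
      | succ m ih =>
        have hst := hstep (n₁ + m) (by omega) p hp
        have hle : c / (((n₁ + m : ℕ) : ℝ) + 1) ^ α ≤ c / (n₁ : ℝ) ^ α := by
          refine div_le_div_of_nonneg_left hc (by positivity) ?_
          refine Real.rpow_le_rpow hn1.le ?_ hα0
          push_cast
          linarith [(Nat.cast_nonneg m : (0 : ℝ) ≤ m)]
        have e : h (n₁ + (m + 1)) - h n₁ = (((n₁ + m : ℕ) : ℝ) + 1) *
            (bernstein' (n₁ + m + 1) f p - f p) -
            ((n₁ + m : ℕ) : ℝ) * (bernstein' (n₁ + m) f p - f p) + (h (n₁ + m) - h n₁) := by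
          simp only [h, ← add_assoc]
          push_cast
          ring
        rw [e]
        refine (abs_add_le _ _).trans ?_
        push_cast at hst hle ih ⊢
        linarith
    have hm := hs (n₂ - n₁)
    rw [Nat.add_sub_cancel' h12.le, Nat.cast_sub h12.le] at hm
    have hpow : (n₂ : ℝ) ^ α ≤ 2 * (n₁ : ℝ) ^ α := calc
      (n₂ : ℝ) ^ α ≤ (2 * n₁) ^ α := Real.rpow_le_rpow hn2.le hcase hα0
      _ = 2 ^ α * (n₁ : ℝ) ^ α := Real.mul_rpow zero_le_two hn1.le
      _ ≤ 2 * (n₁ : ℝ) ^ α := by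
        gcongr
        simpa using Real.rpow_le_rpow_of_exponent_le one_le_two hα1
    have hq : c / (n₁ : ℝ) ^ α ≤ 4 * c / (n₂ : ℝ) ^ α := by
      rw [div_le_div_iff₀ (by positivity) (by positivity)]
      have : 0 ≤ c * (n₁ : ℝ) ^ α := by positivity
      nlinarith [mul_le_mul_of_nonneg_left hpow hc]
    nlinarith [mul_le_mul_of_nonneg_left hq hd.le]

/-- The defect of `log (x + 1) + 1` as an approximation of `(x + 1) log (x + 1) - x log x`. -/
theorem mul_log_succ_sub_mul_log_mem {x : ℝ} (hx : 0 ≤ x) :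
    (x + 1) * Real.log (x + 1) - x * Real.log x ∈
      Set.Icc (Real.log (x + 1) + 1 - (x + 1)⁻¹) (Real.log (x + 1) + 1) := by
  have h1 : 0 < x + 1 := by linarith
  rcases hx.eq_or_lt with rfl | hx
  · simp
  have hy : 0 < (x + 1) / x := by positivity
  have hlog : Real.log ((x + 1) / x) = Real.log (x + 1) - Real.log x :=
    Real.log_div h1.ne' hx.ne'
  have hu := mul_le_mul_of_nonneg_left (Real.log_le_sub_one_of_pos hy) hx.le
  have hl := mul_le_mul_of_nonneg_left (Real.one_sub_inv_le_log_of_pos hy) hx.le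
  rw [hlog] at hu hl
  have e1 : x * ((x + 1) / x - 1) = 1 := by field_simp; ring
  have e2 : x * (1 - ((x + 1) / x)⁻¹) = 1 - (x + 1)⁻¹ := by field_simp; ring
  rw [e1] at hu
  rw [e2] at hl
  constructor <;> linarith

theorem mul_log_mem {u : ℝ} (hu : 0 ≤ u) :
    u * Real.log u ∈ Set.Icc (u - 1) (u * (u - 1)) := by
  rcases hu.eq_or_lt with rfl | hu'
  · simp
  refine ⟨?_, mul_le_mul_of_nonneg_left (Real.log_le_sub_one_of_pos hu') hu⟩
  have h := mul_le_mul_of_nonneg_left (Real.one_sub_inv_le_log_of_pos hu') hu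
  rwa [mul_sub, mul_one, mul_inv_cancel₀ hu'.ne'] at h

section Normalized

variable {n : ℕ} {p : ℝ}

theorem binomialMean_div_mean (hn : 1 ≤ n) (hp : 0 < p) :
    binomialMean n p (fun k => (k : ℝ) / (n * p)) = 1 := by
  have : (0 : ℝ) < n := by exact_mod_cast hn
  simp only [div_eq_inv_mul]
  rw [binomialMean_const_mul, binomialMean_id]
  field_simp

theorem binomialMean_div_mean_mul_sub_one (hn : 1 ≤ n) (hp : 0 < p) :
    binomialMean n p (fun k => (k : ℝ) / (n * p) * ((k : ℝ) / (n * p) - 1)) =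
      (1 - p) / (n * p) := by
  have hn0 : (0 : ℝ) < n := by exact_mod_cast hn
  have e : ∀ k : ℕ, (k : ℝ) / (n * p) * ((k : ℝ) / (n * p) - 1) =
      ((n * p)⁻¹) ^ 2 * (k : ℝ) ^ 2 - (k : ℝ) / (n * p) := fun k => by
    field_simp
  simp only [e]
  rw [binomialMean_sub, binomialMean_const_mul, binomialMean_sq, binomialMean_div_mean hn hp]
  field_simp
  ring

theorem binomialMean_succ_div_mean (hp : 0 < p) :
    binomialMean n p (fun k => ((k : ℝ) + 1) / (((n : ℝ) + 1) * p)) =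
      1 + (1 - p) / (((n : ℝ) + 1) * p) := by
  have hn0 : (0 : ℝ) < (n : ℝ) + 1 := by positivity
  simp only [div_eq_inv_mul]
  rw [binomialMean_const_mul, binomialMean_add, binomialMean_id, binomialMean_const]
  field_simp
  ring

end Normalized

section Entropy

variable {n : ℕ} {p : ℝ}

theorem abs_bernstein'_entropy_bias_le (hn : 1 ≤ n) (hp : p ∈ Set.Icc (0 : ℝ) 1) :
    |bernstein' n (fun p => -(p * Real.log p)) p - -(p * Real.log p)| ≤ 1 / n := by
  have hn0 : (0 : ℝ) < n := by exact_mod_cast hn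
  rcases hp.1.eq_or_lt with rfl | hp0
  · simp [bernstein', zero_pow_eq]
  have e : ∀ k : ℕ, -((k : ℝ) / n * Real.log (k / n)) =
      (-(p * Real.log p)) * (k / (n * p)) -
        p * ((k / (n * p)) * Real.log (k / (n * p))) := fun k => by
    rcases k.eq_zero_or_pos with rfl | hk
    · simp
    have hk0 : (0 : ℝ) < k := by exact_mod_cast hk
    rw [Real.log_div hk0.ne' hn0.ne', Real.log_div hk0.ne' (mul_pos hn0 hp0).ne',
      Real.log_mul hn0.ne' hp0.ne']
    field_simp
    ring
  rw [bernstein'_eq_binomialMean]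
  simp only [e]
  rw [binomialMean_sub, binomialMean_const_mul, binomialMean_const_mul,
    binomialMean_div_mean hn hp0]
  set S := binomialMean n p (fun k => (k : ℝ) / (n * p) * Real.log (k / (n * p))) with hS
  have hmem := fun k : ℕ => mul_log_mem (u := (k : ℝ) / (n * p)) (by positivity)
  have hl : 0 ≤ S := by
    have := binomialMean_mono (n := n) hp fun k => (hmem k).1
    rwa [binomialMean_sub, binomialMean_div_mean hn hp0, binomialMean_const, sub_self] at this
  have hu : S ≤ (1 - p) / (n * p) := by
    have := binomialMean_mono (n := n) hp fun k => (hmem k).2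
    rwa [binomialMean_div_mean_mul_sub_one hn hp0] at this
  have hpu : p * S ≤ 1 / n := calc
    p * S ≤ p * ((1 - p) / (n * p)) := mul_le_mul_of_nonneg_left hu hp0.le
    _ = (1 - p) / n := by field_simp
    _ ≤ 1 / n := by gcongr; linarith
  rw [show -(p * Real.log p) * 1 - p * S - -(p * Real.log p) = -(p * S) by ring, abs_neg,
    abs_of_nonneg (by positivity)]
  exact hpu

theorem mul_bernstein'_entropy (hn : 1 ≤ n) :
    n * bernstein' n (fun p => -(p * Real.log p)) p =
      n * p * Real.log n - binomialMean n p (fun k => k * Real.log k) := by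
  have hn0 : (0 : ℝ) < n := by exact_mod_cast hn
  rw [bernstein'_eq_binomialMean, ← binomialMean_const_mul]
  have e : ∀ k : ℕ, (n : ℝ) * -((k : ℝ) / n * Real.log (k / n)) =
      Real.log n * k - k * Real.log k := fun k => by
    rcases k.eq_zero_or_pos with rfl | hk
    · simp
    have hk0 : (0 : ℝ) < k := by exact_mod_cast hk
    rw [Real.log_div hk0.ne' hn0.ne']
    field_simp
    ring
  simp only [e]
  rw [binomialMean_sub, binomialMean_const_mul, binomialMean_id]
  ring

theorem abs_bernstein'_entropy_step_le (hn : 1 ≤ n) (hp : p ∈ Set.Icc (0 : ℝ) 1) :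
    |((n : ℝ) + 1) * (bernstein' (n + 1) (fun p => -(p * Real.log p)) p - -(p * Real.log p)) -
      n * (bernstein' n (fun p => -(p * Real.log p)) p - -(p * Real.log p))| ≤
        2 / ((n : ℝ) + 1) := by
  rcases hp.1.eq_or_lt with rfl | hp0
  · simp only [bernstein']
    simp [zero_pow_eq]
    positivity
  have hn0 : (0 : ℝ) < n := by exact_mod_cast hn
  have hN0 : (0 : ℝ) < (n : ℝ) + 1 := by positivity
  have hM0 : 0 < ((n : ℝ) + 1) * p := by positivity
  have hs := mul_bernstein'_entropy (n := n + 1) (p := p) (by omega)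
  have hk : ∀ k : ℕ, (0 : ℝ) < (k : ℝ) + 1 := fun k => by positivity
  push_cast at hs
  rw [mul_sub, mul_sub, hs, mul_bernstein'_entropy hn, binomialMean_succ]
  push_cast
  set D := binomialMean n p
    (fun k => ((k : ℝ) + 1) * Real.log ((k : ℝ) + 1) - k * Real.log k) with hD
  have hmem := fun k : ℕ => mul_log_succ_sub_mul_log_mem (x := (k : ℝ)) (by positivity)
  set L := binomialMean n p (fun k => Real.log ((k : ℝ) + 1)) with hL
  have hinv : binomialMean n p (fun k => ((k : ℝ) + 1)⁻¹) ≤ 1 / (((n : ℝ) + 1) * p) := by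
    rw [le_div_iff₀' hM0]
    exact mul_binomialMean_inv_succ_le n hp
  have hDu : D ≤ L + 1 := by
    have := binomialMean_mono (n := n) hp fun k => (hmem k).2
    rwa [binomialMean_add, binomialMean_const] at this
  have hDl : L + 1 - 1 / (((n : ℝ) + 1) * p) ≤ D := by
    have := binomialMean_mono (n := n) hp fun k => (hmem k).1
    rw [binomialMean_sub, binomialMean_add, binomialMean_const] at this
    linarith
  have hlogM : Real.log (((n : ℝ) + 1) * p) = Real.log ((n : ℝ) + 1) + Real.log p :=
    Real.log_mul hN0.ne' hp0.ne'
  have hlogv : ∀ k : ℕ, Real.log (((k : ℝ) + 1) / (((n : ℝ) + 1) * p)) =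
      Real.log ((k : ℝ) + 1) - Real.log (((n : ℝ) + 1) * p) := fun k =>
    Real.log_div (hk k).ne' hM0.ne'
  have hLu : L - Real.log (((n : ℝ) + 1) * p) ≤ 1 / (((n : ℝ) + 1) * p) := by
    have h := binomialMean_mono (n := n) hp fun k : ℕ =>
      Real.log_le_sub_one_of_pos (div_pos (hk k) hM0)
    simp only [hlogv] at h
    rw [binomialMean_sub, binomialMean_sub, binomialMean_succ_div_mean hp0, binomialMean_const,
      binomialMean_const, add_sub_cancel_left] at h
    exact h.trans (by gcongr; linarith)
  have hLl : 0 ≤ L - Real.log (((n : ℝ) + 1) * p) := by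
    have h := binomialMean_mono (n := n) hp fun k : ℕ =>
      Real.one_sub_inv_le_log_of_pos (div_pos (hk k) hM0)
    simp only [hlogv, inv_div] at h
    simp only [div_eq_mul_inv] at h
    rw [binomialMean_sub, binomialMean_sub, binomialMean_const_mul, binomialMean_const,
      binomialMean_const] at h
    linarith [mul_binomialMean_inv_succ_le n hp]
  have hn' := mul_log_succ_sub_mul_log_mem hn0.le
  have hNM : ((n : ℝ) + 1)⁻¹ ≤ 1 / (((n : ℝ) + 1) * p) := by
    rw [inv_eq_one_div]
    exact one_div_le_one_div_of_le hM0 (by nlinarith [hp.2])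
  have e2 : 2 / ((n : ℝ) + 1) = p * (2 * (1 / (((n : ℝ) + 1) * p))) := by field_simp
  set T := ((n : ℝ) + 1) * Real.log ((n : ℝ) + 1) - n * Real.log n with hT
  set F := binomialMean n p (fun k => (k : ℝ) * Real.log k) with hF
  have e : ((n : ℝ) + 1) * p * Real.log ((n : ℝ) + 1) - (F + p * D) -
      ((n : ℝ) + 1) * -(p * Real.log p) - (n * p * Real.log n - F - n * -(p * Real.log p)) =
      p * (T + Real.log p - D) := by
    rw [hT]
    ring
  rw [e, e2, abs_mul, abs_of_pos hp0]
  refine mul_le_mul_of_nonneg_left (abs_le.2 ⟨?_, ?_⟩) hp0.le <;> linarith [hn'.1, hn'.2]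

end Entropy

theorem rpow_le_one_add_mul_sub_one {u α : ℝ} (hu : 0 ≤ u) (hα0 : 0 ≤ α) (hα1 : α ≤ 1) :
    u ^ α ≤ 1 + α * (u - 1) := by
  simpa using rpow_one_add_le_one_add_mul_self (s := u - 1) (by linarith) hα0 hα1

theorem one_sub_mul_le_rpow_div_self {u α : ℝ} (hu : 0 < u) (hα0 : 0 ≤ α) (hα1 : α ≤ 1) :
    1 - (1 - α) * (u - 1) ≤ u ^ α / u := by
  have h := rpow_le_one_add_mul_sub_one hu.le (sub_nonneg.2 hα1) (sub_le_self 1 hα0)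
  have hpos : 0 < u ^ (1 - α) := Real.rpow_pos_of_pos hu _
  have e : u ^ α / u = (u ^ (1 - α))⁻¹ := by
    rw [Real.rpow_sub hu, Real.rpow_one, inv_div]
  rw [e, ← one_div, le_div_iff₀ hpos]
  rcases le_total (1 - (1 - α) * (u - 1)) 0 with hneg | hnn
  · nlinarith
  · nlinarith [mul_le_mul_of_nonneg_left h hnn, sq_nonneg ((1 - α) * (u - 1))]

theorem rpow_div_self_le {u α : ℝ} (hu : 0 < u) (hα0 : 0 ≤ α) (hα1 : α ≤ 1) :
    u ^ α / u ≤ 1 + (1 - α) * (u⁻¹ - 1) := by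
  have h := rpow_le_one_add_mul_sub_one (inv_pos.2 hu).le (sub_nonneg.2 hα1) (sub_le_self 1 hα0)
  rwa [Real.inv_rpow hu.le, Real.rpow_sub hu, Real.rpow_one, inv_div] at h

theorem sub_mul_le_rpow {u α : ℝ} (hu : 0 ≤ u) (hα0 : 0 < α) (hα1 : α ≤ 1) :
    u - (1 - α) * (u * (u - 1)) ≤ u ^ α := by
  rcases hu.eq_or_lt with rfl | hu'
  · simp [Real.zero_rpow hα0.ne']
  have h := one_sub_mul_le_rpow_div_self hu' hα0.le hα1
  rw [le_div_iff₀ hu'] at h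
  linarith

theorem rpow_succ_sub_rpow_mem {x α : ℝ} (hx : 0 ≤ x) (hα0 : 0 < α) (hα1 : α ≤ 1) :
    (x + 1) ^ α - x ^ α ∈ Set.Icc (α * ((x + 1) ^ α / (x + 1)))
      (α * ((x + 1) ^ α / (x + 1)) + (1 - α) * ((x + 1) ^ α / (x + 1) ^ 2)) := by
  have hy : 0 < x + 1 := by linarith
  have hpos : 0 < (x + 1) ^ α := Real.rpow_pos_of_pos hy _
  have hu : 0 ≤ x / (x + 1) := by positivity
  have e : x ^ α = (x + 1) ^ α * (x / (x + 1)) ^ α := by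
    rw [← Real.mul_rpow hy.le hu, mul_div_cancel₀ _ hy.ne']
  have h1 := mul_le_mul_of_nonneg_left (rpow_le_one_add_mul_sub_one hu hα0.le hα1) hpos.le
  have h2 := mul_le_mul_of_nonneg_left (sub_mul_le_rpow hu hα0 hα1) hpos.le
  rw [← e] at h1 h2
  have e1 : (x + 1) ^ α * (1 + α * (x / (x + 1) - 1)) =
      (x + 1) ^ α - α * ((x + 1) ^ α / (x + 1)) := by
    field_simp
    ring
  have e2 : (x + 1) ^ α * (x / (x + 1) - (1 - α) * (x / (x + 1) * (x / (x + 1) - 1))) =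
      (x + 1) ^ α - (α * ((x + 1) ^ α / (x + 1)) + (1 - α) * ((x + 1) ^ α / (x + 1) ^ 2)) := by
    field_simp
    ring
  constructor <;> linarith

theorem rpow_le_self_of_one_le {x α : ℝ} (hα1 : α ≤ 1) (hx : 1 ≤ x) : x ^ α ≤ x := by
  simpa using Real.rpow_le_rpow_of_exponent_le hx hα1

section Power

variable {n : ℕ} {p α : ℝ}

theorem binomialMean_rpow_div_mean_mem (hn : 1 ≤ n) (hp : p ∈ Set.Icc (0 : ℝ) 1) (hp0 : 0 < p)
    (hα0 : 0 < α) (hα1 : α ≤ 1) :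
    binomialMean n p (fun k => ((k : ℝ) / (n * p)) ^ α) ∈ Set.Icc (1 - 1 / (n * p)) 1 := by
  have hn0 : (0 : ℝ) < n := by exact_mod_cast hn
  have hu : ∀ k : ℕ, 0 ≤ (k : ℝ) / (n * p) := fun k => by positivity
  constructor
  · have h := binomialMean_mono (n := n) hp fun k => sub_mul_le_rpow (hu k) hα0 hα1
    rw [binomialMean_sub, binomialMean_const_mul, binomialMean_div_mean hn hp0,
      binomialMean_div_mean_mul_sub_one hn hp0] at h
    refine le_trans ?_ h
    have h1 : (1 - p) / (n * p) ≤ 1 / (n * p) := by gcongr; linarith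
    have h2 : 0 ≤ (1 - p) / (n * p) := div_nonneg (sub_nonneg.2 hp.2) (by positivity)
    nlinarith
  · have h := binomialMean_mono (n := n) hp fun k =>
      rpow_le_one_add_mul_sub_one (hu k) hα0.le hα1
    rwa [binomialMean_add, binomialMean_const_mul, binomialMean_sub,
      binomialMean_div_mean hn hp0, binomialMean_const, sub_self, mul_zero, add_zero] at h

theorem binomialMean_rpow (hn : 1 ≤ n) (hp0 : 0 < p) :
    binomialMean n p (fun k => (k : ℝ) ^ α) =
      (n * p) ^ α * binomialMean n p (fun k => ((k : ℝ) / (n * p)) ^ α) := by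
  have hM : (0 : ℝ) < n * p := mul_pos (by exact_mod_cast hn) hp0
  rw [← binomialMean_const_mul]
  congr 1
  funext k
  rw [← Real.mul_rpow hM.le (by positivity), mul_div_cancel₀ _ hM.ne']

theorem bernstein'_rpow (n : ℕ) (p α : ℝ) :
    bernstein' n (fun p => p ^ α) p = binomialMean n p (fun k => (k : ℝ) ^ α) / (n : ℝ) ^ α := by
  rw [bernstein'_eq_binomialMean, div_eq_inv_mul, ← binomialMean_const_mul]
  congr 1
  funext k
  rw [Real.div_rpow (by positivity) (by positivity), div_eq_inv_mul]

theorem abs_bernstein'_rpow_bias_le (hn : 1 ≤ n) (hp : p ∈ Set.Icc (0 : ℝ) 1) (hα0 : 0 < α)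
    (hα1 : α ≤ 1) :
    |bernstein' n (fun p => p ^ α) p - p ^ α| ≤ 1 / (n : ℝ) ^ α := by
  have hn0 : (0 : ℝ) < n := by exact_mod_cast hn
  rcases hp.1.eq_or_lt with rfl | hp0
  · simp only [bernstein']
    simp [zero_pow_eq, Real.zero_rpow hα0.ne']
    positivity
  have hM : (0 : ℝ) < n * p := mul_pos hn0 hp0
  have hMα : (0 : ℝ) < (n * p) ^ α := Real.rpow_pos_of_pos hM _
  obtain ⟨hl, hu⟩ := binomialMean_rpow_div_mean_mem hn hp hp0 hα0 hα1
  have h0 : 0 ≤ binomialMean n p (fun k => ((k : ℝ) / (n * p)) ^ α) := by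
    rw [← binomialMean_const n p 0]
    exact binomialMean_mono hp fun k => by positivity
  have e : p ^ α = (n * p) ^ α / (n : ℝ) ^ α := by
    rw [Real.mul_rpow hn0.le hp0.le]
    field_simp
  rw [bernstein'_rpow, binomialMean_rpow hn hp0, e, ← sub_div, abs_div,
    abs_of_pos (Real.rpow_pos_of_pos hn0 α)]
  gcongr
  set s := binomialMean n p (fun k => ((k : ℝ) / (n * p)) ^ α)
  rw [abs_le]
  constructor
  · rcases le_total (n * p) 1 with h | h
    · have := Real.rpow_le_one hM.le h hα0.le
      nlinarith
    · have h1 := rpow_le_self_of_one_le hα1 h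
      have h2 : (n * p) ^ α * (1 / (n * p)) ≤ 1 := by
        rw [mul_one_div]
        exact div_le_one_of_le₀ h1 hM.le
      nlinarith [mul_le_mul_of_nonneg_left hl hMα.le]
  · nlinarith

theorem binomialMean_rpow_succ_sub_mem (hp : p ∈ Set.Icc (0 : ℝ) 1) (hα0 : 0 < α)
    (hα1 : α ≤ 1) :
    binomialMean n p (fun k => ((k : ℝ) + 1) ^ α - (k : ℝ) ^ α) ∈ Set.Icc 0 1 := by
  constructor
  · rw [← binomialMean_const n p 0]
    refine binomialMean_mono hp fun k => sub_nonneg.2 ?_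
    exact Real.rpow_le_rpow (by positivity) (by linarith) hα0.le
  · refine (binomialMean_mono hp fun k => ?_).trans_eq (binomialMean_const n p 1)
    have h := Real.rpow_add_le_add_rpow (a := (k : ℝ)) (b := 1) (by positivity) zero_le_one
      hα0.le hα1
    rw [Real.one_rpow] at h
    linarith

theorem abs_mul_binomialMean_rpow_succ_sub_le (hp : p ∈ Set.Icc (0 : ℝ) 1) (hα0 : 0 < α)
    (hα1 : α ≤ 1) (hM : 1 ≤ ((n : ℝ) + 1) * p) :
    |((n : ℝ) + 1) * p * binomialMean n p (fun k => ((k : ℝ) + 1) ^ α - (k : ℝ) ^ α) -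
      α * (((n : ℝ) + 1) * p) ^ α| ≤ 1 := by
  have hp0 : 0 < p := by
    rcases hp.1.eq_or_lt with rfl | h
    · norm_num at hM
    · exact h
  set M := ((n : ℝ) + 1) * p with hMdef
  have hM0 : 0 < M := one_pos.trans_le hM
  have hMα : 0 < M ^ α := Real.rpow_pos_of_pos hM0 _
  have hMle := rpow_le_self_of_one_le hα1 hM
  set R := binomialMean n p (fun k => ((k : ℝ) + 1) ^ α / ((k : ℝ) + 1)) with hR
  have hk : ∀ k : ℕ, (0 : ℝ) < (k : ℝ) + 1 := fun k => by positivity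
  have hinv := mul_binomialMean_inv_succ_le n hp
  rw [← hMdef] at hinv
  set I := binomialMean n p (fun k => ((k : ℝ) + 1)⁻¹)
  have hmem := fun k : ℕ => rpow_succ_sub_rpow_mem (x := (k : ℝ)) (by positivity) hα0 hα1
  set D := binomialMean n p (fun k => ((k : ℝ) + 1) ^ α - (k : ℝ) ^ α)
  have hDl : α * R ≤ D := by
    rw [hR, ← binomialMean_const_mul]
    exact binomialMean_mono hp fun k => (hmem k).1
  have hDu : D ≤ α * R + (1 - α) * I := by
    rw [hR, ← binomialMean_const_mul, ← binomialMean_const_mul, ← binomialMean_add]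
    refine binomialMean_mono hp fun k => (hmem k).2.trans ?_
    have h := rpow_le_self_of_one_le hα1 (show (1 : ℝ) ≤ (k : ℝ) + 1 by simp)
    have h2 : ((k : ℝ) + 1) ^ α / ((k : ℝ) + 1) ^ 2 ≤ ((k : ℝ) + 1)⁻¹ := by
      have := hk k
      rw [div_le_iff₀ (by positivity), sq, inv_mul_cancel_left₀ this.ne']
      exact h
    have := mul_le_mul_of_nonneg_left h2 (sub_nonneg.2 hα1)
    linarith
  have e : M * R = M ^ α * binomialMean n p
      (fun k => (((k : ℝ) + 1) / M) ^ α / (((k : ℝ) + 1) / M)) := by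
    rw [hR, ← binomialMean_const_mul, ← binomialMean_const_mul]
    congr 1
    funext k
    rw [Real.div_rpow (hk k).le hM0.le]
    have := hk k
    field_simp
  have hRu : M * R ≤ M ^ α := by
    rw [e]
    refine mul_le_of_le_one_right hMα.le ?_
    have h := binomialMean_mono (n := n) hp fun k : ℕ =>
      rpow_div_self_le (div_pos (hk k) hM0) hα0.le hα1
    simp only [inv_div] at h
    simp only [div_eq_mul_inv M] at h
    rw [binomialMean_add, binomialMean_const_mul, binomialMean_sub, binomialMean_const,
      binomialMean_const_mul] at h
    nlinarith
  have hRl : M ^ α - (1 - α) ≤ M * R := by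
    rw [e]
    have h := binomialMean_mono (n := n) hp fun k : ℕ =>
      one_sub_mul_le_rpow_div_self (div_pos (hk k) hM0) hα0.le hα1
    rw [binomialMean_sub, binomialMean_const_mul, binomialMean_sub, binomialMean_const,
      hMdef, binomialMean_succ_div_mean hp0, ← hMdef, add_sub_cancel_left] at h
    have h1 : M ^ α * ((1 - p) / M) ≤ 1 := by
      rw [← mul_div_assoc, div_le_one hM0]
      nlinarith [hp.2]
    nlinarith [mul_le_mul_of_nonneg_left h hMα.le, mul_le_mul_of_nonneg_left h1 (sub_nonneg.2 hα1)]
  have h1 := mul_le_mul_of_nonneg_left hDl hM0.le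
  have h2 := mul_le_mul_of_nonneg_left hDu hM0.le
  rw [abs_le]
  constructor <;> nlinarith

theorem abs_bernstein'_rpow_step_le (hn : 1 ≤ n) (hp : p ∈ Set.Icc (0 : ℝ) 1) (hα0 : 0 < α)
    (hα1 : α < 1) :
    |((n : ℝ) + 1) * (bernstein' (n + 1) (fun p => p ^ α) p - p ^ α) -
      n * (bernstein' n (fun p => p ^ α) p - p ^ α)| ≤ 4 / ((n : ℝ) + 1) ^ α := by
  have hn0 : (0 : ℝ) < n := by exact_mod_cast hn
  rcases hp.1.eq_or_lt with rfl | hp0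
  · simp only [bernstein']
    simp [zero_pow_eq, Real.zero_rpow hα0.ne']
    positivity
  have hN : (0 : ℝ) < (n : ℝ) + 1 := by positivity
  have hNα : 0 < ((n : ℝ) + 1) ^ α := Real.rpow_pos_of_pos hN _
  have hM0 : 0 < ((n : ℝ) + 1) * p := by positivity
  have hsucc : binomialMean (n + 1) p (fun k => (k : ℝ) ^ α) =
      binomialMean n p (fun k => (k : ℝ) ^ α) +
        p * binomialMean n p (fun k => ((k : ℝ) + 1) ^ α - (k : ℝ) ^ α) := by
    simp [binomialMean_succ]
  have hs := binomialMean_rpow (n := n + 1) (α := α) (by omega) hp0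
  have hsmem := binomialMean_rpow_div_mean_mem (n := n + 1) (by omega) hp hp0 hα0 hα1.le
  have hs0 : 0 ≤ binomialMean (n + 1) p (fun k => ((k : ℝ) / ((n + 1 : ℕ) * p)) ^ α) := by
    rw [← binomialMean_const (n + 1) p 0]
    exact binomialMean_mono hp fun k => by positivity
  push_cast at hs hsmem hs0
  have hDmem := binomialMean_rpow_succ_sub_mem (n := n) hp hα0 hα1.le
  have hMD := abs_mul_binomialMean_rpow_succ_sub_le (n := n) hp hα0 hα1.le
  have hA := rpow_succ_sub_rpow_mem hn0.le (sub_pos.2 hα1) (sub_le_self 1 hα0.le)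
  have hpα : p ^ α = (((n : ℝ) + 1) * p) ^ α / ((n : ℝ) + 1) ^ α := by
    rw [Real.mul_rpow hN.le hp0.le]
    field_simp
  have e1 : ((n : ℝ) + 1) ^ (1 - α) = ((n : ℝ) + 1) / ((n : ℝ) + 1) ^ α := by
    rw [Real.rpow_sub hN, Real.rpow_one]
  have e2 : (n : ℝ) ^ (1 - α) = n / (n : ℝ) ^ α := by
    rw [Real.rpow_sub hn0, Real.rpow_one]
  set a := ((n : ℝ) + 1) ^ (1 - α) - (n : ℝ) ^ (1 - α) with ha
  set D := binomialMean n p (fun k => ((k : ℝ) + 1) ^ α - (k : ℝ) ^ α)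
  set M := ((n : ℝ) + 1) * p with hM
  set s := binomialMean (n + 1) p (fun k => ((k : ℝ) / M) ^ α)
  have hMα : 0 < M ^ α := Real.rpow_pos_of_pos hM0 _
  obtain ⟨A, hAdef⟩ : ∃ A, A = ((n : ℝ) + 1) ^ α * a := ⟨_, rfl⟩
  have hAl : 1 - α ≤ A := by
    have := mul_le_mul_of_nonneg_left hA.1 hNα.le
    rw [e1, ← hAdef] at this
    refine le_of_eq_of_le ?_ this
    field_simp
  have hAu : A ≤ 1 - α + α / ((n : ℝ) + 1) := by
    have := mul_le_mul_of_nonneg_left hA.2 hNα.le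
    rw [e1, ← hAdef] at this
    refine this.trans_eq ?_
    field_simp
    ring
  have hA1 : A ≤ 1 := by
    have : α / ((n : ℝ) + 1) ≤ α := div_le_self hα0.le (by linarith)
    linarith
  have hmain : ((n : ℝ) + 1) * (bernstein' (n + 1) (fun p => p ^ α) p - p ^ α) -
      n * (bernstein' n (fun p => p ^ α) p - p ^ α) =
      (A * (M ^ α * s) + M * D - A * p * D - M ^ α) / ((n : ℝ) + 1) ^ α := by
    have hX : binomialMean n p (fun k => (k : ℝ) ^ α) = M ^ α * s - p * D := by
      rw [← hs, hsucc]
      ring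
    have ha' : n / (n : ℝ) ^ α = (((n : ℝ) + 1) - A) / ((n : ℝ) + 1) ^ α := by
      rw [← e2, hAdef, sub_div, mul_div_cancel_left₀ _ hNα.ne', ← e1, ha]
      ring
    rw [bernstein'_rpow, bernstein'_rpow, hs, hX]
    push_cast
    have e3 : (n : ℝ) * ((M ^ α * s - p * D) / (n : ℝ) ^ α - p ^ α) =
        n / (n : ℝ) ^ α * (M ^ α * s - p * D) - n * p ^ α := by ring
    rw [e3, ha', hpα, hM]
    field_simp
    ring
  rw [hmain, abs_div, abs_of_pos hNα]
  gcongr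
  have hA0 : 0 ≤ A := by linarith
  have hApD0 : 0 ≤ A * p * D := mul_nonneg (mul_nonneg hA0 hp0.le) hDmem.1
  have hApD1 : A * p * D ≤ 1 :=
    mul_le_one₀ (mul_le_one₀ hA1 hp0.le hp.2) hDmem.1 hDmem.2
  have hMs0 : 0 ≤ M ^ α * s := mul_nonneg hMα.le hs0
  have hMs1 : M ^ α * s ≤ M ^ α := mul_le_of_le_one_right hMα.le hsmem.2
  rcases le_total M 1 with h | h
  · have hMα1 := Real.rpow_le_one hM0.le h hα0.le
    have hMD0 : 0 ≤ M * D := mul_nonneg hM0.le hDmem.1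
    have hMD1 : M * D ≤ 1 := mul_le_one₀ h hDmem.1 hDmem.2
    have hAM0 : 0 ≤ A * (M ^ α * s) := mul_nonneg hA0 hMs0
    have hAM1 : A * (M ^ α * s) ≤ 1 := mul_le_one₀ hA1 hMs0 (hMs1.trans hMα1)
    rw [abs_le]
    constructor <;> linarith
  · have hD := abs_le.1 (hMD h)
    have hMle := rpow_le_self_of_one_le hα1.le h
    have hMN : M ^ α ≤ (n : ℝ) + 1 := hMle.trans (mul_le_of_le_one_right hN.le hp.2)
    have hsl : M ^ α - 1 ≤ M ^ α * s := by
      have h1 : M ^ α * (1 / M) ≤ 1 := by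
        rw [mul_one_div]
        exact div_le_one_of_le₀ hMle hM0.le
      linarith [mul_le_mul_of_nonneg_left hsmem.1 hMα.le]
    have hu : (A - (1 - α)) * (M ^ α * s) ≤ 1 := calc
      (A - (1 - α)) * (M ^ α * s) ≤ (α / ((n : ℝ) + 1)) * ((n : ℝ) + 1) :=
        mul_le_mul (by linarith) (hMs1.trans hMN) hMs0 (by positivity)
      _ = α := by field_simp
      _ ≤ 1 := hα1.le
    have hl : 0 ≤ (A - (1 - α)) * (M ^ α * s) := mul_nonneg (by linarith) hMs0
    have hl' := mul_le_mul_of_nonneg_left hsl (sub_pos.2 hα1).le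
    have hu' := mul_le_mul_of_nonneg_left hMs1 (sub_pos.2 hα1).le
    rw [abs_le]
    constructor <;> nlinarith [hD.1, hD.2]

end Power

/-- for any general 2-jackknife, the bias for `f(p) = −p ln p` is `O(1/n₂)`,
and for `f(p) = p^α` (`0<α<1`) it is `O(n₂^{-α})`, uniformly over `2 ≤ n₁ < n₂`. -/
theorem jack2_bias_entropy_power_upper :
    (∃ c > 0, ∀ n₁ n₂ : ℕ, 2 ≤ n₁ → n₁ < n₂ →
      jack2Bias n₁ n₂ (fun p => -(p * Real.log p)) ≤ c / n₂) ∧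
    (∀ α : ℝ, 0 < α → α < 1 → ∃ c > 0, ∀ n₁ n₂ : ℕ, 2 ≤ n₁ → n₁ < n₂ →
      jack2Bias n₁ n₂ (fun p => p ^ α) ≤ c / (n₂ : ℝ) ^ α) := by
  refine ⟨⟨8, by norm_num, fun n₁ n₂ h1 h12 => ?_⟩, fun α hα0 hα1 =>
    ⟨16, by norm_num, fun n₁ n₂ h1 h12 => ?_⟩⟩
  · have h := jack2Bias_le_of_bernstein'_bias (f := fun p => -(p * Real.log p)) (α := 1) (c := 2)
      zero_le_one le_rfl
      (fun n hn p hp => (abs_bernstein'_entropy_bias_le hn hp).trans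
        (by rw [Real.rpow_one]; gcongr; norm_num))
      (fun n hn p hp => by
        rw [Real.rpow_one]
        exact abs_bernstein'_entropy_step_le hn hp)
      (one_le_two.trans h1) h12
    rw [Real.rpow_one] at h
    norm_num at h
    exact h
  · have h := jack2Bias_le_of_bernstein'_bias (f := fun p => p ^ α) (c := 4) hα0.le hα1.le
      (fun n hn p hp => (abs_bernstein'_rpow_bias_le hn hp hα0 hα1.le).trans
        (by gcongr; norm_num))
      (fun n hn p hp => abs_bernstein'_rpow_step_le hn hp hα0 hα1)
      (one_le_two.trans h1) h12
    norm_num at h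
    exact h
end
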